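/- For all integers k ≥ 1, N ≥ 1 and m with 0 ≤ m ≤ kN, the matrix integral I_k(m;N) equals the number of k×k integer arrays x = (x_i^{(j)})_{1 ≤ i,j ≤ k} satisfying: (1) 0 ≤ x_i^{(j)} ≤ N for all 1 ≤ i, j ≤ k; (2) the anti-diagonal sum x_1^{(k)} + x_2^{(k−1)} + ⋯ + x_k^{(1)} = kN − m; and (3) the entries are weakly increasing along rows and weakly decreasing down columns, i.e. x_i^{(j)} ≤ x_i^{(j+1)} for all 1 ≤ i ≤ k, 1 ≤ j ≤ k−1, and x_{i+1}^{(j)} ≤ x_i^{(j)} for all 1 ≤ i ≤ k−1, 1 ≤ j ≤ k. -/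

import Mathlib

open MeasureTheory Polynomial

noncomputable instance (R : ℕ) : MeasurableSpace (Matrix.unitaryGroup (Fin R) ℂ) := borel _
instance (R : ℕ) : BorelSpace (Matrix.unitaryGroup (Fin R) ℂ) := ⟨rfl⟩

/-- The trace of the `j`-th exterior power of `θ`, i.e. the coefficient of `T^j` in
`det(I + T·θ)`. -/
noncomputable def extPowTrace (R : ℕ) (θ : Matrix.unitaryGroup (Fin R) ℂ) (j : ℕ) : ℂ :=
  ((1 + (X : ℂ[X]) • (θ : Matrix (Fin R) (Fin R) ℂ).map C).det).coeff j

/-- The matrix integral `I_k(n;R)`: the integral over the unitary group `U(R)` of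
`|∑_{n₁+⋯+n_k=n} ∏ᵢ Tr(Λ^{nᵢ} θ)|²`, with respect to the measure `μ` (which in the
theorems below is assumed to be the Haar probability measure). The summands with some
`nᵢ > R` vanish, since `det(I + T·θ)` has degree `R`. -/
noncomputable def matrixIntegral (k n R : ℕ)
    (μ : Measure (Matrix.unitaryGroup (Fin R) ℂ)) : ℝ :=
  ∫ θ, ‖∑ x ∈ Finset.Nat.antidiagonalTuple k n, ∏ i, extPowTrace R θ (x i)‖ ^ 2 ∂μ

namespace UnitaryMoments

section Derivations

variable {S A ι : Type*} [CommRing S] [CommRing A] [Algebra S A]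

theorem derivation_prod [DecidableEq ι] (D : Derivation S A A) (s : Finset ι) (f : ι → A) :
    D (∏ i ∈ s, f i) = ∑ i ∈ s, (∏ j ∈ s.erase i, f j) * D (f i) := by
  induction s using Finset.induction_on with
  | empty => simp
  | insert a s ha ih =>
    rw [Finset.prod_insert ha, D.leibniz, ih, Finset.sum_insert ha, Finset.erase_insert ha,
      smul_eq_mul, smul_eq_mul, Finset.mul_sum, add_comm]
    congr 1
    refine Finset.sum_congr rfl fun i hi => ?_
    have hia : a ≠ i := fun h => ha (h ▸ hi)
    rw [Finset.erase_insert_of_ne hia, Finset.prod_insert (by simp [ha]), mul_assoc]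

/-- **Jacobi's formula** for a derivation. -/
theorem derivation_det [Fintype ι] [DecidableEq ι] (D : Derivation S A A) (M : Matrix ι ι A) :
    D M.det = (M.adjugate * M.map D).trace := by
  have h : ∀ i, (M.adjugate * M.map D) i i = (M.updateCol i fun r => D (M r i)).det := by
    intro i
    rw [← Matrix.cramer_apply, Matrix.cramer_eq_adjugate_mulVec]
    rfl
  rw [Matrix.trace]
  simp only [Matrix.diag_apply, h, Matrix.det_apply, map_sum]
  rw [Finset.sum_comm]
  refine Finset.sum_congr rfl fun σ _ => ?_
  rw [← Finset.smul_sum]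
  have : D (∏ i, M (σ i) i) =
      ∑ i, ∏ j, (M.updateCol i fun r => D (M r i)) (σ j) j := by
    rw [derivation_prod]
    refine Finset.sum_congr rfl fun i _ => ?_
    rw [← Finset.prod_erase_mul _ _ (Finset.mem_univ i)]
    congr 1
    · refine Finset.prod_congr rfl fun j hj => ?_
      rw [Matrix.updateCol_ne (Finset.ne_of_mem_erase hj)]
    · simp
  rw [← this, Units.smul_def, Units.smul_def, map_zsmul]

theorem map_derivation_mul [Fintype ι] (D : Derivation S A A) (M M' : Matrix ι ι A) :
    (M * M').map D = M.map D * M' + M * M'.map D := by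
  ext i j
  simp [Matrix.mul_apply, D.leibniz, Finset.sum_add_distrib, mul_comm, add_comm]

/-- The derivative of the adjugate, multiplied by the determinant. -/
theorem det_smul_map_derivation_adjugate [Fintype ι] [DecidableEq ι] (D : Derivation S A A)
    (M : Matrix ι ι A) :
    M.det • M.adjugate.map D = D M.det • M.adjugate - M.adjugate * M.map D * M.adjugate := by
  have h1 : (M.adjugate * M).map D = D M.det • (1 : Matrix ι ι A) := by
    rw [Matrix.adjugate_mul]
    ext i j
    by_cases hij : i = j <;> simp [hij]
  rw [map_derivation_mul] at h1
  have h2 := congrArg (· * M.adjugate) h1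
  simp only [add_mul, Matrix.mul_assoc, Matrix.mul_adjugate, Matrix.mul_smul, Matrix.smul_mul,
    Matrix.mul_one, Matrix.one_mul] at h2
  rw [← h2, Matrix.mul_assoc]
  abel

end Derivations

section GenericMatrix

/-- Polynomial functions on `N × N` complex matrices. -/
abbrev MatPoly (N : ℕ) := MvPolynomial (Fin N × Fin N) ℂ

/-- The generic matrix. -/
noncomputable abbrev genericMat (N : ℕ) : Matrix (Fin N) (Fin N) (MatPoly N) :=
  Matrix.mvPolynomialX (Fin N) (Fin N) ℂ

theorem genericMat_apply (N : ℕ) (i j : Fin N) : genericMat N i j = MvPolynomial.X (i, j) := rfl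

/-- The derivation of `MatPoly N` induced by the infinitesimal left translation by the matrix
unit `E_pq`. -/
noncomputable def leftDer {N : ℕ} (p q : Fin N) : Derivation ℂ (MatPoly N) (MatPoly N) :=
  MvPolynomial.mkDerivation ℂ fun x => if x.1 = p then MvPolynomial.X (q, x.2) else 0

/-- The Euler derivation of `MatPoly N`. -/
noncomputable def euler (N : ℕ) : Derivation ℂ (MatPoly N) (MatPoly N) :=
  MvPolynomial.mkDerivation ℂ MvPolynomial.X

theorem euler_eq_sum (N : ℕ) (h : MatPoly N) : euler N h = ∑ p, leftDer p p h := by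
  have : euler N = ∑ p, leftDer p p := by
    refine MvPolynomial.derivation_ext fun x => ?_
    have h1 : (∑ p, leftDer p p : Derivation ℂ (MatPoly N) (MatPoly N)) (MvPolynomial.X x) =
        ∑ p, leftDer p p (MvPolynomial.X x) := by
      rw [← Derivation.coeFnAddMonoidHom_apply, map_sum, Finset.sum_apply]
      rfl
    rw [h1]
    simp [euler, leftDer, MvPolynomial.mkDerivation_X]
  rw [this, ← Derivation.coeFnAddMonoidHom_apply, map_sum, Finset.sum_apply]
  rfl

variable {N : ℕ}

/-- `1 + aΘ` for the generic matrix `Θ`. -/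
noncomputable def onePlus (N : ℕ) (a : ℂ) : Matrix (Fin N) (Fin N) (MatPoly N) :=
  1 + a • genericMat N

/-- `det (1 + aΘ)`. -/
noncomputable def detE (N : ℕ) (a : ℂ) : MatPoly N := (onePlus N a).det

/-- The matrix `det (1 + aΘ) - adj (1 + aΘ) = aΘ adj (1 + aΘ)`. -/
noncomputable def matW (N : ℕ) (a : ℂ) : Matrix (Fin N) (Fin N) (MatPoly N) :=
  detE N a • 1 - (onePlus N a).adjugate

theorem smul_generic_mul_adjugate (a : ℂ) :
    (a • genericMat N) * (onePlus N a).adjugate = matW N a := by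
  have := Matrix.mul_adjugate (onePlus N a)
  rw [matW, detE, ← this]
  nth_rw 2 [onePlus]
  rw [add_mul, one_mul, add_sub_cancel_left]

theorem adjugate_mul_smul_generic (a : ℂ) :
    (onePlus N a).adjugate * (a • genericMat N) = matW N a := by
  have := Matrix.adjugate_mul (onePlus N a)
  rw [matW, detE, ← this]
  nth_rw 3 [onePlus]
  rw [mul_add, mul_one, add_sub_cancel_left]

theorem map_leftDer_onePlus (a : ℂ) (p q : Fin N) :
    (onePlus N a).map (leftDer p q) = Matrix.single p q 1 * (a • genericMat N) := by
  refine Matrix.ext fun i j => ?_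
  have h1 : leftDer p q ((1 : Matrix (Fin N) (Fin N) (MatPoly N)) i j) = 0 := by
    by_cases h : i = j <;> simp [h, Matrix.one_apply]
  have h2 : leftDer p q (genericMat N i j) = if i = p then genericMat N q j else 0 := by
    rw [genericMat_apply, genericMat_apply, leftDer, MvPolynomial.mkDerivation_X]
  rw [Matrix.map_apply, onePlus, Matrix.add_apply, Matrix.smul_apply, map_add, Derivation.map_smul,
    h1, h2]
  by_cases h : i = p
  · subst h
    simp
  · rw [Matrix.single_mul_apply_of_ne _ _ _ _ _ h]
    simp [h]

theorem map_euler_onePlus (a : ℂ) : (onePlus N a).map (euler N) = a • genericMat N := by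
  refine Matrix.ext fun i j => ?_
  have h1 : euler N ((1 : Matrix (Fin N) (Fin N) (MatPoly N)) i j) = 0 := by
    by_cases h : i = j <;> simp [h, Matrix.one_apply]
  rw [Matrix.map_apply, onePlus, Matrix.add_apply, Matrix.smul_apply, map_add, Derivation.map_smul, h1,
    genericMat_apply, euler, MvPolynomial.mkDerivation_X]
  simp

theorem leftDer_detE (a : ℂ) (p q : Fin N) : leftDer p q (detE N a) = matW N a q p := by
  rw [detE, derivation_det, map_leftDer_onePlus, Matrix.trace_mul_comm, Matrix.mul_assoc,
    smul_generic_mul_adjugate, Matrix.trace_single_mul]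
  simp

theorem trace_matW (a : ℂ) : (matW N a).trace = euler N (detE N a) := by
  rw [detE, derivation_det, map_euler_onePlus, adjugate_mul_smul_generic]

theorem detE_ne_zero (a : ℂ) : detE N a ≠ 0 := by
  intro h
  have h1 := congrArg (MvPolynomial.eval (0 : Fin N × Fin N → ℂ)) h
  rw [detE, RingHom.map_det, onePlus] at h1
  have h2 : (MvPolynomial.eval (0 : Fin N × Fin N → ℂ)).mapMatrix (1 + a • genericMat N) = 1 := by
    ext i j
    by_cases h : i = j <;> simp [h, Matrix.one_apply]
  rw [h2] at h1
  simp at h1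

theorem sum_leftDer_adjugate (a : ℂ) :
    ∑ p, ∑ q, leftDer p q ((onePlus N a).adjugate p q) =
      - euler N (onePlus N a).adjugate.trace := by
  apply mul_left_cancel₀ (detE_ne_zero a)
  have h1 : ∀ p q, detE N a * leftDer p q ((onePlus N a).adjugate p q) =
      matW N a q p * (onePlus N a).adjugate p q - (onePlus N a).adjugate p p * matW N a q q := by
    intro p q
    have := congrFun (congrFun (det_smul_map_derivation_adjugate (leftDer p q) (onePlus N a)) p) q
    rw [map_leftDer_onePlus, ← detE, leftDer_detE, Matrix.mul_assoc, Matrix.mul_assoc,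
      smul_generic_mul_adjugate] at this
    simpa [Matrix.mul_apply, Matrix.single_apply, Finset.sum_ite_eq, ite_and] using this
  have h2 : detE N a * euler N (onePlus N a).adjugate.trace =
      (matW N a).trace * (onePlus N a).adjugate.trace -
        (matW N a * (onePlus N a).adjugate).trace := by
    have := congrArg Matrix.trace (det_smul_map_derivation_adjugate (euler N) (onePlus N a))
    rw [map_euler_onePlus, ← detE, ← trace_matW, adjugate_mul_smul_generic, Matrix.trace_sub,
      Matrix.trace_smul, Matrix.trace_smul, smul_eq_mul, smul_eq_mul] at this
    rw [← this]
    simp [Matrix.trace]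
  rw [mul_neg, h2]
  simp only [Finset.mul_sum, h1, Finset.sum_sub_distrib]
  have h3 : (matW N a * (onePlus N a).adjugate).trace =
      ∑ p, ∑ q, matW N a q p * (onePlus N a).adjugate p q := by
    rw [Finset.sum_comm]
    rfl
  rw [h3, Matrix.trace, Matrix.trace, Finset.sum_mul_sum]
  simp only [Matrix.diag_apply]
  rw [Finset.sum_comm (f := fun i j => (onePlus N a).adjugate i i * matW N a j j)]
  simp only [mul_comm ((onePlus N a).adjugate _ _), neg_sub]

theorem sum_leftDer_matW (a : ℂ) :
    ∑ p, ∑ q, leftDer p q (matW N a p q) =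
      (N + 1 : ℂ) • euler N (detE N a) - euler N (euler N (detE N a)) := by
  have h1 : ∀ p q, leftDer p q (matW N a p q) =
      (if p = q then leftDer p q (detE N a) else 0) -
        leftDer p q ((onePlus N a).adjugate p q) := by
    intro p q
    by_cases h : p = q <;> simp [matW, h]
  have h2 : (onePlus N a).adjugate.trace = (N : ℂ) • detE N a - euler N (detE N a) := by
    rw [← trace_matW, matW, Matrix.trace_sub, Matrix.trace_smul, Matrix.trace_one]
    simp [Algebra.smul_def, mul_comm]
  simp only [h1, Finset.sum_sub_distrib, sum_leftDer_adjugate, h2]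
  simp only [Finset.sum_ite_eq, Finset.mem_univ, if_true, map_sub, Derivation.map_smul, ← euler_eq_sum]
  module

theorem matW_mul_matW (a b : ℂ) :
    (b - a) • (matW N a * matW N b) =
      b • detE N b • matW N a - a • detE N a • matW N b := by
  have h1 : detE N b • matW N a = matW N a * ((onePlus N b).adjugate + matW N b) := by
    rw [matW, matW]; simp
  have h2 : detE N a • matW N b = ((onePlus N a).adjugate + matW N a) * matW N b := by
    rw [matW, matW]; simp
  have h3 : b • (matW N a * (onePlus N b).adjugate) = a • ((onePlus N a).adjugate * matW N b) := by
    rw [← adjugate_mul_smul_generic, ← smul_generic_mul_adjugate b]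
    simp only [Matrix.mul_smul, Matrix.smul_mul, Matrix.mul_assoc]
    rw [smul_comm]
  rw [h1, h2, mul_add, add_mul, smul_add, smul_add, h3]
  module

theorem trace_matW_mul_matW (a b : ℂ) :
    (b - a) • (matW N a * matW N b).trace =
      b • (euler N (detE N a) * detE N b) - a • (detE N a * euler N (detE N b)) := by
  rw [← Matrix.trace_smul, matW_mul_matW]
  simp only [Matrix.trace_sub, Matrix.trace_smul, trace_matW, smul_eq_mul]
  rw [mul_comm (detE N b)]

/-- `det (1 + TΘ)` as a polynomial in `T`. -/
noncomputable def detPoly (N : ℕ) : (MatPoly N)[X] :=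
  (1 + (X : (MatPoly N)[X]) • (genericMat N).map C).det

/-- The coefficient of `T^r` in `det (1 + TΘ)`. -/
noncomputable def elemSym (N r : ℕ) : MatPoly N := (detPoly N).coeff r

theorem natDegree_detPoly_le (N : ℕ) : (detPoly N).natDegree ≤ N := by
  have := Polynomial.natDegree_det_X_add_C_le (genericMat N) 1
  rw [detPoly, add_comm]
  simpa using this

theorem elemSym_eq_zero {r : ℕ} (h : N < r) : elemSym N r = 0 :=
  coeff_eq_zero_of_natDegree_lt ((natDegree_detPoly_le N).trans_lt h)

theorem mapMatrix_eval_detPoly (a : ℂ) :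
    (evalRingHom (MvPolynomial.C a : MatPoly N)).mapMatrix
      (1 + (X : (MatPoly N)[X]) • (genericMat N).map C) = onePlus N a := by
  refine Matrix.ext fun i j => ?_
  by_cases h : i = j <;>
    simp [h, onePlus, MvPolynomial.smul_eq_C_mul, mul_comm (MvPolynomial.C a)]

theorem eval_detPoly (a : ℂ) : (detPoly N).eval (MvPolynomial.C a) = detE N a := by
  rw [← coe_evalRingHom, detPoly, RingHom.map_det, mapMatrix_eval_detPoly, detE]

theorem detE_eq_sum (a : ℂ) : detE N a = ∑ r ∈ Finset.range (N + 1), a ^ r • elemSym N r := by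
  rw [← eval_detPoly, eval_eq_sum_range' (Nat.lt_succ_of_le (natDegree_detPoly_le N))]
  refine Finset.sum_congr rfl fun r _ => ?_
  rw [MvPolynomial.smul_eq_C_mul, map_pow, mul_comm, elemSym]

theorem eval_X_mul_derivative_detPoly (a : ℂ) :
    (X * derivative (detPoly N)).eval (MvPolynomial.C a) = euler N (detE N a) := by
  have h : derivative (detPoly N) =
      ((1 + (X : (MatPoly N)[X]) • (genericMat N).map C).adjugate * (genericMat N).map C).trace := by
    have := derivation_det (derivative' (R := MatPoly N))
      (1 + (X : (MatPoly N)[X]) • (genericMat N).map C)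
    rw [derivative'_apply] at this
    rw [detPoly, this]
    congr 2
    refine Matrix.ext fun i j => ?_
    by_cases h : i = j <;> simp [h]
  rw [eval_mul, eval_X, h, ← trace_matW, ← adjugate_mul_smul_generic, ← mapMatrix_eval_detPoly,
    Matrix.mul_smul, Matrix.trace_smul, ← RingHom.map_adjugate, MvPolynomial.smul_eq_C_mul]
  congr 1
  rw [← coe_evalRingHom, Matrix.trace, Matrix.trace, map_sum]
  refine Finset.sum_congr rfl fun i _ => ?_
  simp [Matrix.mul_apply]

theorem euler_elemSym (r : ℕ) : euler N (elemSym N r) = (r : ℂ) • elemSym N r := by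
  set F : (MatPoly N)[X] := ∑ r ∈ Finset.range (N + 1),
    Polynomial.monomial r (euler N (elemSym N r)) - X * derivative (detPoly N) with hF
  have hF0 : F = 0 := by
    refine eq_zero_of_infinite_isRoot _ ((Set.infinite_range_of_injective
      (MvPolynomial.C_injective (Fin N × Fin N) ℂ)).mono ?_)
    rintro _ ⟨a, rfl⟩
    rw [Set.mem_ofPred_eq, IsRoot, hF, eval_sub, eval_X_mul_derivative_detPoly, detE_eq_sum,
      map_sum, eval_finsetSum, sub_eq_zero]
    refine Finset.sum_congr rfl fun r _ => ?_
    rw [eval_monomial, Derivation.map_smul, MvPolynomial.smul_eq_C_mul, map_pow, mul_comm]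
  rcases lt_or_ge N r with h | h
  · simp [elemSym_eq_zero h]
  · have h1 := congrArg (fun p => p.coeff r) hF0
    simp only [hF, coeff_sub, finsetSum_coeff, coeff_monomial, Finset.sum_ite_eq',
      Finset.mem_range, Nat.lt_succ_of_le h, if_true, coeff_zero, sub_eq_zero] at h1
    rw [h1]
    rcases r with _ | r
    · simp
    · rw [coeff_X_mul, coeff_derivative, elemSym, MvPolynomial.smul_eq_C_mul, mul_comm]
      simp

theorem euler_detE_eq_sum (a : ℂ) :
    euler N (detE N a) = ∑ r ∈ Finset.range (N + 1), (r * a ^ r : ℂ) • elemSym N r := by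
  rw [detE_eq_sum, map_sum]
  refine Finset.sum_congr rfl fun r _ => ?_
  rw [Derivation.map_smul, euler_elemSym, smul_smul, mul_comm]

theorem euler_euler_detE_eq_sum (a : ℂ) :
    euler N (euler N (detE N a)) =
      ∑ r ∈ Finset.range (N + 1), (r * (r * a ^ r) : ℂ) • elemSym N r := by
  rw [euler_detE_eq_sum, map_sum]
  refine Finset.sum_congr rfl fun r _ => ?_
  rw [Derivation.map_smul, euler_elemSym, smul_smul, mul_comm]

theorem sum_comm_three {α β γ B : Type*} [AddCommMonoid B] (r : Finset α) (s : Finset β)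
    (t : Finset γ) (F : α → β → γ → B) :
    ∑ p ∈ r, ∑ q ∈ s, ∑ j ∈ t, F p q j = ∑ j ∈ t, ∑ p ∈ r, ∑ q ∈ s, F p q j := by
  rw [Finset.sum_comm (s := t)]
  exact Finset.sum_congr rfl fun p _ => Finset.sum_comm

theorem derivation_derivation_prod {S A ι : Type*} [CommRing S] [CommRing A] [Algebra S A]
    [DecidableEq ι] (D D' : Derivation S A A) (s : Finset ι) (f : ι → A) :
    D (D' (∏ i ∈ s, f i)) = ∑ j ∈ s, ((∏ l ∈ s.erase j, f l) * D (D' (f j)) +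
      ∑ i ∈ s.erase j, (∏ l ∈ (s.erase j).erase i, f l) * (D' (f j) * D (f i))) := by
  rw [derivation_prod, map_sum]
  refine Finset.sum_congr rfl fun j _ => ?_
  rw [D.leibniz, derivation_prod, smul_eq_mul, smul_eq_mul, Finset.mul_sum]
  congr 1
  refine Finset.sum_congr rfl fun i _ => ?_
  ring

/-- The action of the Casimir element on `∏ⱼ det (1 + aⱼ Θ)`. -/
theorem casimir_prod_detE {ι : Type*} [Fintype ι] [DecidableEq ι] (a : ι → ℂ) :
    ∑ p, ∑ q, leftDer p q (leftDer q p (∏ j, detE N (a j))) =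
      ∑ j, (∏ l ∈ Finset.univ.erase j, detE N (a l)) *
          ((N + 1 : ℂ) • euler N (detE N (a j)) - euler N (euler N (detE N (a j)))) +
      ∑ j, ∑ i ∈ Finset.univ.erase j, (∏ l ∈ (Finset.univ.erase j).erase i, detE N (a l)) *
        (matW N (a j) * matW N (a i)).trace := by
  have h : ∀ p q : Fin N, leftDer p q (leftDer q p (∏ j, detE N (a j))) =
      ∑ j, ((∏ l ∈ Finset.univ.erase j, detE N (a l)) * leftDer p q (matW N (a j) p q) +
        ∑ i ∈ Finset.univ.erase j, (∏ l ∈ (Finset.univ.erase j).erase i, detE N (a l)) *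
          (matW N (a j) p q * matW N (a i) q p)) := by
    intro p q
    rw [derivation_derivation_prod]
    simp only [leftDer_detE]
  rw [Finset.sum_congr rfl fun p _ => Finset.sum_congr rfl fun q _ => h p q]
  rw [sum_comm_three, ← Finset.sum_add_distrib]
  refine Finset.sum_congr rfl fun j _ => ?_
  simp only [Finset.sum_add_distrib, ← sum_leftDer_matW, Finset.mul_sum]
  congr 1
  rw [sum_comm_three]
  refine Finset.sum_congr rfl fun i _ => ?_
  simp only [Matrix.trace, Matrix.diag_apply, Matrix.mul_apply, Finset.mul_sum]

end GenericMatrix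

section HaarInvariance

variable {N : ℕ}

/-- Evaluation of a polynomial function at a matrix. -/
noncomputable def evalMat (θ : Matrix (Fin N) (Fin N) ℂ) : MatPoly N →+* ℂ :=
  MvPolynomial.eval fun x => θ x.1 x.2

theorem evalMat_smul (θ : Matrix (Fin N) (Fin N) ℂ) (c : ℂ) (h : MatPoly N) :
    evalMat θ (c • h) = c * evalMat θ h := by
  simp [evalMat]

theorem evalMat_det (θ : Matrix (Fin N) (Fin N) ℂ) : evalMat θ (genericMat N).det = θ.det := by
  rw [RingHom.map_det]
  congr 1
  ext i j
  simp [evalMat]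

/-- The derivation of `MatPoly N` induced by the infinitesimal left translation by `Y`. -/
noncomputable def dirDer (Y : Matrix (Fin N) (Fin N) ℂ) :
    Derivation ℂ (MatPoly N) (MatPoly N) :=
  MvPolynomial.mkDerivation ℂ fun x =>
    ∑ q, Y x.1 q • (MvPolynomial.X (q, x.2) : MatPoly N)

theorem dirDer_single (p q : Fin N) : dirDer (Matrix.single p q (1 : ℂ)) = leftDer p q := by
  refine MvPolynomial.derivation_ext fun x => ?_
  rw [dirDer, leftDer, MvPolynomial.mkDerivation_X, MvPolynomial.mkDerivation_X]
  by_cases h : p = x.1 <;> simp [Matrix.single_apply, h, eq_comm]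

theorem dirDer_add (Y Z : Matrix (Fin N) (Fin N) ℂ) : dirDer (Y + Z) = dirDer Y + dirDer Z := by
  refine MvPolynomial.derivation_ext fun x => ?_
  simp [dirDer, MvPolynomial.mkDerivation_X, add_smul, Finset.sum_add_distrib]

theorem dirDer_smul (c : ℂ) (Y : Matrix (Fin N) (Fin N) ℂ) : dirDer (c • Y) = c • dirDer Y := by
  refine MvPolynomial.derivation_ext fun x => ?_
  simp [dirDer, MvPolynomial.mkDerivation_X, mul_smul, Finset.smul_sum]

theorem dirDer_det (Y : Matrix (Fin N) (Fin N) ℂ) :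
    dirDer Y (genericMat N).det = Y.trace • (genericMat N).det := by
  have h : (genericMat N).map (dirDer Y) = Y.map MvPolynomial.C * genericMat N := by
    refine Matrix.ext fun i j => ?_
    rw [Matrix.map_apply, genericMat_apply, dirDer, MvPolynomial.mkDerivation_X, Matrix.mul_apply]
    simp [MvPolynomial.smul_eq_C_mul]
  rw [derivation_det, h, Matrix.trace_mul_comm, Matrix.mul_assoc, Matrix.mul_adjugate,
    Matrix.mul_smul, Matrix.mul_one, Matrix.trace_smul, smul_eq_mul, MvPolynomial.smul_eq_C_mul,
    mul_comm]
  simp [Matrix.trace]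

theorem dirDer_det_pow (Y : Matrix (Fin N) (Fin N) ℂ) (k : ℕ) :
    dirDer Y ((genericMat N).det ^ k) = (k * Y.trace) • (genericMat N).det ^ k := by
  rw [Derivation.leibniz_pow, dirDer_det]
  rcases k with _ | k
  · simp
  · rw [Nat.add_sub_cancel, smul_eq_mul, mul_smul_comm, ← pow_succ, mul_smul,
      Nat.cast_smul_eq_nsmul]

theorem hasDerivAt_evalMat {γ : ℝ → Matrix (Fin N) (Fin N) ℂ} {Y : Matrix (Fin N) (Fin N) ℂ}
    {t : ℝ} (hγ : ∀ i j, HasDerivAt (fun u => γ u i j) ((Y * γ t) i j) t) (h : MatPoly N) :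
    HasDerivAt (fun u => evalMat (γ u) h) (evalMat (γ t) (dirDer Y h)) t := by
  induction h using MvPolynomial.induction_on with
  | C a => simpa [evalMat] using hasDerivAt_const t a
  | add f g hf hg =>
    rw [map_add, map_add]
    exact (hf.add hg).congr_of_eventuallyEq (Filter.Eventually.of_forall fun u => map_add _ _ _)
  | mul_X f x hf =>
    have h1 := hf.mul (hγ x.1 x.2)
    have h2 : evalMat (γ t) (dirDer Y (f * MvPolynomial.X x)) =
        evalMat (γ t) (dirDer Y f) * γ t x.1 x.2 + evalMat (γ t) f * (Y * γ t) x.1 x.2 := by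
      have h3 : evalMat (γ t) (dirDer Y (MvPolynomial.X x)) = (Y * γ t) x.1 x.2 := by
        rw [dirDer, MvPolynomial.mkDerivation_X, Matrix.mul_apply, map_sum]
        simp [evalMat]
      have h4 : evalMat (γ t) (MvPolynomial.X x) = γ t x.1 x.2 := by simp [evalMat]
      rw [Derivation.leibniz, map_add, smul_eq_mul, smul_eq_mul, map_mul, map_mul, h3, h4]
      ring
    rw [h2]
    refine h1.congr_of_eventuallyEq (Filter.Eventually.of_forall fun u => ?_)
    simp [evalMat]

theorem continuous_evalMat (h : MatPoly N) :
    Continuous fun θ : Matrix.unitaryGroup (Fin N) ℂ => evalMat (θ : Matrix _ _ ℂ) h := by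
  refine (MvPolynomial.continuous_eval h).comp (continuous_pi fun x => ?_)
  exact (continuous_apply_apply x.1 x.2).comp continuous_subtype_val

theorem exists_bound_evalMat (h : MatPoly N) :
    ∃ B : ℝ, ∀ θ : Matrix.unitaryGroup (Fin N) ℂ, ‖evalMat (θ : Matrix _ _ ℂ) h‖ ≤ B := by
  induction h using MvPolynomial.induction_on with
  | C a => exact ⟨‖a‖, fun θ => by simp [evalMat]⟩
  | add f g hf hg =>
    obtain ⟨B, hB⟩ := hf
    obtain ⟨B', hB'⟩ := hg
    exact ⟨B + B', fun θ => by
      rw [map_add]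
      exact (norm_add_le _ _).trans (add_le_add (hB θ) (hB' θ))⟩
  | mul_X f x hf =>
    obtain ⟨B, hB⟩ := hf
    refine ⟨B, fun θ => ?_⟩
    have h1 := entry_norm_bound_of_unitary θ.2 x.1 x.2
    have h2 : evalMat (θ : Matrix _ _ ℂ) (MvPolynomial.X x) =
        (θ : Matrix (Fin N) (Fin N) ℂ) x.1 x.2 := by simp [evalMat]
    rw [map_mul, h2, norm_mul]
    calc _ ≤ ‖evalMat (θ : Matrix _ _ ℂ) f‖ * 1 := by gcongr
      _ ≤ B := by rw [mul_one]; exact hB θ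

section Haar

variable (μ : Measure (Matrix.unitaryGroup (Fin N) ℂ))

theorem integrable_star_mul [IsFiniteMeasure μ] (f g : MatPoly N) :
    Integrable (fun θ : Matrix.unitaryGroup (Fin N) ℂ =>
      star (evalMat (θ : Matrix _ _ ℂ) f) * evalMat (θ : Matrix _ _ ℂ) g) μ := by
  obtain ⟨B, hB⟩ := exists_bound_evalMat f
  obtain ⟨B', hB'⟩ := exists_bound_evalMat g
  refine Integrable.of_bound (C := B * B') ?_ (Filter.Eventually.of_forall fun θ => ?_)
  · exact ((continuous_evalMat f).star.mul (continuous_evalMat g)).aestronglyMeasurable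
  · rw [norm_mul, norm_star]
    exact mul_le_mul (hB θ) (hB' θ) (norm_nonneg _) ((norm_nonneg _).trans (hB θ))

/-- The sesquilinear pairing of polynomial functions on the unitary group. -/
noncomputable def pairing (f g : MatPoly N) : ℂ :=
  ∫ θ, star (evalMat (θ : Matrix (Fin N) (Fin N) ℂ) f) *
    evalMat (θ : Matrix (Fin N) (Fin N) ℂ) g ∂μ

open scoped Matrix.Norms.L2Operator in
/-- The one-parameter subgroup of the unitary group generated by a skew-Hermitian matrix. -/
theorem exists_unitary_flow (Y : Matrix (Fin N) (Fin N) ℂ) (hY : star Y = -Y) :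
    ∃ G : ℝ → Matrix (Fin N) (Fin N) ℂ, (∀ t, G t ∈ Matrix.unitaryGroup (Fin N) ℂ) ∧ G 0 = 1 ∧
      ∀ t (θ : Matrix (Fin N) (Fin N) ℂ) i j,
        HasDerivAt (fun u => (G u * θ) i j) ((Y * (G t * θ)) i j) t := by
  refine ⟨fun t => NormedSpace.exp (t • Y), fun t => ?_, by simp, fun t θ i j => ?_⟩
  · have hs : star (NormedSpace.exp (t • Y)) = NormedSpace.exp (-(t • Y)) := by
      rw [Matrix.star_eq_conjTranspose, ← Matrix.exp_conjTranspose, ← Matrix.star_eq_conjTranspose,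
        star_smul, hY, smul_neg]
      simp
    rw [Matrix.mem_unitaryGroup_iff', hs,
      ← Matrix.exp_add_of_commute _ _ (Commute.refl (t • Y)).neg_left, neg_add_cancel,
      NormedSpace.exp_zero]
  · have h1 := hasDerivAt_exp_smul_const (𝕂 := ℝ) Y t
    have h2 : NormedSpace.exp (t • Y) * Y = Y * NormedSpace.exp (t • Y) :=
      ((Commute.refl Y).smul_left t).exp_left.eq
    rw [h2] at h1
    have h3 := h1.mul_const θ
    rw [Matrix.mul_assoc] at h3
    let φ : Matrix (Fin N) (Fin N) ℂ →L[ℝ] ℂ :=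
      LinearMap.toContinuousLinearMap (Matrix.entryLinearMap ℝ ℂ i j)
    exact φ.hasFDerivAt.comp_hasDerivAt t h3

/-- Left invariance of the Haar measure, infinitesimally. -/
theorem pairing_dirDer_add_pairing [IsFiniteMeasure μ] [μ.IsMulLeftInvariant]
    (Y : Matrix (Fin N) (Fin N) ℂ) (hY : star Y = -Y) (f g : MatPoly N) :
    pairing μ (dirDer Y f) g + pairing μ f (dirDer Y g) = 0 := by
  obtain ⟨G, hG, hG0, hentry⟩ := exists_unitary_flow Y hY
  let U := Matrix.unitaryGroup (Fin N) ℂ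
  let u : ℝ → U := fun t => ⟨G t, hG t⟩
  let e : MatPoly N → U → ℂ := fun f θ => evalMat (θ : Matrix (Fin N) (Fin N) ℂ) f
  have hder : ∀ (f : MatPoly N) t (θ : U), HasDerivAt (fun v => e f (u v * θ))
      (e (dirDer Y f) (u t * θ)) t := fun f t θ => hasDerivAt_evalMat (hentry t θ) f
  have h_int : ∀ f g : MatPoly N, Integrable (fun θ => star (e f θ) * e g θ) μ :=
    integrable_star_mul μ
  have hpair : ∀ f g : MatPoly N, pairing μ f g = ∫ θ, star (e f θ) * e g θ ∂μ := fun _ _ => rfl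
  have hu0 : u 0 = 1 := Subtype.ext hG0
  obtain ⟨b1, h1⟩ : ∃ B : ℝ, ∀ θ, ‖e f θ‖ ≤ B := exists_bound_evalMat f
  obtain ⟨b2, h2⟩ : ∃ B : ℝ, ∀ θ, ‖e g θ‖ ≤ B := exists_bound_evalMat g
  obtain ⟨b3, h3⟩ : ∃ B : ℝ, ∀ θ, ‖e (dirDer Y f) θ‖ ≤ B := exists_bound_evalMat _
  obtain ⟨b4, h4⟩ : ∃ B : ℝ, ∀ θ, ‖e (dirDer Y g) θ‖ ≤ B := exists_bound_evalMat _
  rw [hpair, hpair, ← integral_add (h_int _ _) (h_int _ _)]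
  clear_value e u
  let Ψ : U → ℂ := fun θ => star (e f θ) * e g θ
  let Φ : U → ℂ := fun θ => star (e (dirDer Y f) θ) * e g θ + star (e f θ) * e (dirDer Y g) θ
  have hΨ : Integrable Ψ μ := h_int f g
  have hΦ : Integrable Φ μ := (h_int _ _).add (h_int _ _)
  have hB : ∀ θ, ‖Φ θ‖ ≤ b3 * b2 + b1 * b4 := by
    refine fun θ => (norm_add_le _ _).trans (add_le_add ?_ ?_)
    · rw [norm_mul, norm_star]
      exact mul_le_mul (h3 θ) (h2 θ) (norm_nonneg _) ((norm_nonneg _).trans (h3 θ))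
    · rw [norm_mul, norm_star]
      exact mul_le_mul (h1 θ) (h4 θ) (norm_nonneg _) ((norm_nonneg _).trans (h1 θ))
  have hd : ∀ t θ, HasDerivAt (fun v => Ψ (u v * θ)) (Φ (u t * θ)) t :=
    fun t θ => (hder f t θ).star.mul (hder g t θ)
  change ∫ θ, Φ θ ∂μ = 0
  clear_value Ψ Φ
  have hmain := hasDerivAt_integral_of_dominated_loc_of_deriv_le (μ := μ) (𝕜 := ℝ)
    (F := fun t θ => Ψ (u t * θ)) (F' := fun t θ => Φ (u t * θ)) (x₀ := 0)
    (bound := fun _ => b3 * b2 + b1 * b4) Filter.univ_mem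
    (Filter.Eventually.of_forall fun t => (hΨ.comp_mul_left (u t)).aestronglyMeasurable)
    (hΨ.comp_mul_left (u 0)) (hΦ.comp_mul_left (u 0)).aestronglyMeasurable
    (Filter.Eventually.of_forall fun θ t _ => hB (u t * θ)) (integrable_const _)
    (Filter.Eventually.of_forall fun θ t _ => hd t θ)
  have hderiv := hmain.2
  simp only [integral_mul_left_eq_self (μ := μ) Ψ, hu0, one_mul] at hderiv
  exact hderiv.unique (hasDerivAt_const _ _)

/-- The functional `h ↦ ∫ conj(det θ)^k h(θ) dθ`. -/
noncomputable def detFunctional [IsFiniteMeasure μ] (k : ℕ) : MatPoly N →ₗ[ℂ] ℂ where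
  toFun := pairing μ ((genericMat N).det ^ k)
  map_add' g h := by
    rw [pairing, pairing, pairing, ← integral_add (integrable_star_mul μ _ _)
      (integrable_star_mul μ _ _)]
    simp only [map_add, mul_add]
  map_smul' c h := by
    rw [pairing, pairing, RingHom.id_apply, smul_eq_mul, ← integral_const_mul]
    simp only [evalMat_smul]
    congr 1
    funext θ
    ring

theorem pairing_smul_left (c : ℂ) (f g : MatPoly N) :
    pairing μ (c • f) g = star c * pairing μ f g := by
  rw [pairing, pairing, ← integral_const_mul]
  simp only [evalMat_smul, star_mul', mul_assoc]

theorem detFunctional_dirDer [IsFiniteMeasure μ] [μ.IsMulLeftInvariant] (k : ℕ)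
    (Y : Matrix (Fin N) (Fin N) ℂ) (h : MatPoly N) :
    detFunctional μ k (dirDer Y h) = k * Y.trace * detFunctional μ k h := by
  have hskew : ∀ Z : Matrix (Fin N) (Fin N) ℂ, star Z = -Z →
      detFunctional μ k (dirDer Z h) = k * Z.trace * detFunctional μ k h := by
    intro Z hZ
    have h1 := pairing_dirDer_add_pairing μ Z hZ ((genericMat N).det ^ k) h
    rw [dirDer_det_pow, pairing_smul_left] at h1
    have h2 : star ((k : ℂ) * Z.trace) = -(k * Z.trace) := by
      rw [star_mul', ← Matrix.trace_conjTranspose, ← Matrix.star_eq_conjTranspose, hZ]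
      simp
    rw [h2] at h1
    change pairing μ _ _ = _ * pairing μ _ _
    linear_combination h1
  have hdec : Y = (1 / 2 : ℂ) • (Y - star Y) +
      (-(Complex.I / 2)) • (Complex.I • (Y + star Y)) := by
    have : -(Complex.I / 2) * Complex.I = 1 / 2 := by
      linear_combination (-1 / 2 : ℂ) * Complex.I_mul_I
    rw [smul_smul, this]
    module
  have h1 := hskew (Y - star Y) (by simp)
  have h2 := hskew (Complex.I • (Y + star Y)) (by
    rw [star_smul, star_add, star_star]; simp [add_comm])
  rw [hdec]
  generalize Y - star Y = A at *
  generalize Complex.I • (Y + star Y) = B at *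
  rw [dirDer_add, dirDer_smul, dirDer_smul, Matrix.trace_add, Matrix.trace_smul,
    Matrix.trace_smul, Derivation.add_apply, Derivation.smul_apply, Derivation.smul_apply, map_add,
    map_smul, map_smul, h1, h2]
  simp only [smul_eq_mul]
  ring

theorem detFunctional_leftDer [IsFiniteMeasure μ] [μ.IsMulLeftInvariant] (k : ℕ)
    (p q : Fin N) (h : MatPoly N) :
    detFunctional μ k (leftDer p q h) = if p = q then k * detFunctional μ k h else 0 := by
  rw [← dirDer_single, detFunctional_dirDer]
  by_cases hpq : p = q
  · subst hpq; simp
  · simp [Matrix.trace_single_eq_of_ne _ _ _ hpq, hpq]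

theorem detFunctional_euler [IsFiniteMeasure μ] [μ.IsMulLeftInvariant] (k : ℕ) (h : MatPoly N) :
    detFunctional μ k (euler N h) = k * N * detFunctional μ k h := by
  rw [euler_eq_sum, map_sum]
  simp only [detFunctional_leftDer]
  simp
  ring

theorem detFunctional_casimir [IsFiniteMeasure μ] [μ.IsMulLeftInvariant] (k : ℕ)
    (h : MatPoly N) :
    detFunctional μ k (∑ p, ∑ q, leftDer p q (leftDer q p h)) =
      k * detFunctional μ k (euler N h) := by
  simp only [map_sum, detFunctional_leftDer, Finset.sum_ite_eq, Finset.mem_univ, if_true,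
    euler_eq_sum, Finset.mul_sum]

end Haar

end HaarInvariance

section EulerOperators

variable {M : ℕ}

/-- The operator `X_i ∂/∂X_i`. -/
noncomputable def delta (i : Fin M) :
    Derivation ℂ (MvPolynomial (Fin M) ℂ) (MvPolynomial (Fin M) ℂ) :=
  (MvPolynomial.X i : MvPolynomial (Fin M) ℂ) • MvPolynomial.pderiv i

theorem delta_X (i j : Fin M) :
    delta i (MvPolynomial.X j) = if i = j then (MvPolynomial.X i : MvPolynomial (Fin M) ℂ) else 0 := by
  rw [delta, Derivation.smul_apply]
  by_cases h : i = j
  · subst h; simp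
  · simp [h, MvPolynomial.pderiv_X_of_ne (Ne.symm h)]

theorem delta_monomial (i : Fin M) (s : Fin M →₀ ℕ) (c : ℂ) :
    delta i (MvPolynomial.monomial s c) = MvPolynomial.monomial s ((s i : ℂ) * c) := by
  rw [delta, Derivation.smul_apply, smul_eq_mul, MvPolynomial.X_mul_pderiv_monomial]
  simp [MvPolynomial.smul_monomial]

theorem coeff_delta (i : Fin M) (s : Fin M →₀ ℕ) (F : MvPolynomial (Fin M) ℂ) :
    (delta i F).coeff s = s i * F.coeff s := by
  induction F using MvPolynomial.induction_on' with
  | monomial t c =>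
    rw [delta_monomial, MvPolynomial.coeff_monomial, MvPolynomial.coeff_monomial]
    split_ifs with h
    · rw [h]
    · simp
  | add p q hp hq => rw [map_add, MvPolynomial.coeff_add, hp, hq, MvPolynomial.coeff_add, mul_add]

theorem eval_derivation_prod {ι : Type*} (D : Derivation ℂ (MvPolynomial (Fin M) ℂ)
    (MvPolynomial (Fin M) ℂ)) (a : Fin M → ℂ) (s : Finset ι) (f : ι → MvPolynomial (Fin M) ℂ)
    (hf : ∀ i ∈ s, MvPolynomial.eval a (f i) ≠ 0) :
    MvPolynomial.eval a (D (∏ i ∈ s, f i)) = MvPolynomial.eval a (∏ i ∈ s, f i) *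
      ∑ i ∈ s, MvPolynomial.eval a (D (f i)) / MvPolynomial.eval a (f i) := by
  classical
  induction s using Finset.induction_on with
  | empty => simp
  | insert x s hx ih =>
    have h0 := hf x (Finset.mem_insert_self x s)
    rw [Finset.prod_insert hx, Finset.sum_insert hx, Derivation.leibniz, map_add, smul_eq_mul,
      smul_eq_mul, map_mul, map_mul, ih fun i hi => hf i (Finset.mem_insert_of_mem hi), map_mul]
    field_simp
    ring

/-- The Vandermonde polynomial. -/
noncomputable def vdm (M : ℕ) : MvPolynomial (Fin M) ℂ :=
  (Matrix.vandermonde (MvPolynomial.X : Fin M → MvPolynomial (Fin M) ℂ)).det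

theorem eval_vdm (a : Fin M → ℂ) : MvPolynomial.eval a (vdm M) = (Matrix.vandermonde a).det := by
  rw [vdm, RingHom.map_det]
  congr 1
  ext i j
  simp [Matrix.vandermonde]

theorem eval_delta_vdm {a : Fin M → ℂ} (ha : Function.Injective a) (l : Fin M) :
    MvPolynomial.eval a (delta l (vdm M)) = MvPolynomial.eval a (vdm M) *
      ∑ j ∈ Finset.univ.erase l, a l / (a l - a j) := by
  have hne : ∀ i, ∀ j ∈ Finset.Ioi i, a j - a i ≠ 0 := fun i j hj =>
    sub_ne_zero.2 fun h => (Finset.mem_Ioi.1 hj).ne' (ha h)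
  have hvdm : vdm M = ∏ i, ∏ j ∈ Finset.Ioi i, ((MvPolynomial.X j : MvPolynomial (Fin M) ℂ) -
      MvPolynomial.X i) := Matrix.det_vandermonde _
  rw [hvdm, eval_derivation_prod _ _ _ _ fun i _ => by
    rw [map_prod]
    exact Finset.prod_ne_zero_iff.2 fun j hj => by simpa using hne i j hj]
  congr 1
  have h1 : ∀ i, MvPolynomial.eval a (delta l (∏ j ∈ Finset.Ioi i,
      ((MvPolynomial.X j : MvPolynomial (Fin M) ℂ) - MvPolynomial.X i))) /
      MvPolynomial.eval a (∏ j ∈ Finset.Ioi i,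
      ((MvPolynomial.X j : MvPolynomial (Fin M) ℂ) - MvPolynomial.X i)) =
      (if l ∈ Finset.Ioi i then a l / (a l - a i) else 0) +
      if i = l then ∑ j ∈ Finset.Ioi i, a l / (a l - a j) else 0 := by
    intro i
    have h0 : MvPolynomial.eval a (∏ j ∈ Finset.Ioi i,
      ((MvPolynomial.X j : MvPolynomial (Fin M) ℂ) - MvPolynomial.X i)) ≠ 0 := by
      rw [map_prod]
      exact Finset.prod_ne_zero_iff.2 fun j hj => by simpa using hne i j hj
    rw [eval_derivation_prod _ _ _ _ fun j hj => by simpa using hne i j hj,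
      mul_div_cancel_left₀ _ h0]
    have h2 : ∀ j ∈ Finset.Ioi i, MvPolynomial.eval a (delta l (MvPolynomial.X j -
        MvPolynomial.X i)) / MvPolynomial.eval a (MvPolynomial.X j - MvPolynomial.X i) =
        (if l = j then a l / (a l - a i) else 0) + if i = l then a l / (a l - a j) else 0 := by
      intro j hj
      have hij : i ≠ j := (Finset.mem_Ioi.1 hj).ne
      have h4 := hne i j hj
      rw [map_sub, delta_X, delta_X]
      by_cases hl : l = j
      · subst hl
        simp [hij, hij.symm]
      · by_cases hi : i = l
        · subst hi
          simp only [hl, if_false, if_true, zero_sub, map_neg, map_sub, MvPolynomial.eval_X,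
            zero_add]
          rw [← neg_sub (a j) (a i), div_neg, neg_div]
        · simp [hl, hi, Ne.symm hi]
    rw [Finset.sum_congr rfl h2, Finset.sum_add_distrib, Finset.sum_ite_eq]
    congr 1
    by_cases hi : i = l <;> simp [hi]
  rw [Finset.sum_congr rfl fun i _ => h1 i, Finset.sum_add_distrib, Finset.sum_ite_eq',
    if_pos (Finset.mem_univ l), ← Finset.sum_filter]
  have h3 : (Finset.univ.erase l : Finset (Fin M)) =
      (Finset.univ.filter fun i => l ∈ Finset.Ioi i) ∪ Finset.Ioi l := by
    ext j
    simp [lt_or_lt_iff_ne]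
  rw [h3, Finset.sum_union]
  refine Finset.disjoint_left.2 fun j hj hj' => ?_
  simp at hj hj'
  exact lt_asymm hj hj'

theorem vdm_ne_zero : vdm M ≠ 0 := by
  rw [vdm, Matrix.det_vandermonde_ne_zero_iff]
  exact MvPolynomial.X_injective

theorem vdm_eq_sum : vdm M = ∑ σ : Equiv.Perm (Fin M), MvPolynomial.monomial
    (Finsupp.equivFunOnFinite.symm fun i => ((σ i : Fin M) : ℕ)) ((Equiv.Perm.sign σ : ℤ) : ℂ) := by
  rw [vdm, ← Matrix.det_transpose, Matrix.det_apply']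
  refine Finset.sum_congr rfl fun σ _ => ?_
  rw [MvPolynomial.monomial_eq, Finsupp.prod_fintype _ _ fun i => pow_zero _]
  simp [Matrix.vandermonde]

theorem sum_delta_delta_vdm : ∑ i, delta i (delta i (vdm M)) =
    (∑ i : Fin M, (i : ℂ) ^ 2) • vdm M := by
  rw [vdm_eq_sum, Finset.smul_sum]
  simp only [map_sum]
  rw [Finset.sum_comm]
  refine Finset.sum_congr rfl fun σ _ => ?_
  simp only [delta_monomial, MvPolynomial.smul_monomial]
  rw [← map_sum]
  congr 1
  simp only [← mul_assoc, ← Finset.sum_mul, smul_eq_mul]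
  congr 1
  simp only [Finsupp.equivFunOnFinite_symm_apply_apply, ← sq]
  exact Equiv.sum_comp σ fun i => ((i : ℕ) : ℂ) ^ 2

theorem sum_delta_vdm : ∑ i, delta i (vdm M) = (∑ i : Fin M, (i : ℂ)) • vdm M := by
  rw [vdm_eq_sum, Finset.smul_sum]
  simp only [map_sum]
  rw [Finset.sum_comm]
  refine Finset.sum_congr rfl fun σ _ => ?_
  simp only [delta_monomial, MvPolynomial.smul_monomial]
  rw [← map_sum]
  congr 1
  simp only [← Finset.sum_mul, smul_eq_mul]
  congr 1
  simp only [Finsupp.equivFunOnFinite_symm_apply_apply]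
  exact Equiv.sum_comp σ fun i => ((i : ℕ) : ℂ)

end EulerOperators

section GeneratingPolynomial

variable {N M : ℕ}

/-- The generating polynomial of the values of the functional `L` on products of coefficients
of `det (1 + T Θ)`. -/
noncomputable def genPoly (L : MatPoly N →ₗ[ℂ] ℂ) (M : ℕ) : MvPolynomial (Fin M) ℂ :=
  ∑ r ∈ Fintype.piFinset fun _ : Fin M => Finset.range (N + 1),
    MvPolynomial.monomial (Finsupp.equivFunOnFinite.symm r) (L (∏ j, elemSym N (r j)))

theorem coeff_genPoly (L : MatPoly N →ₗ[ℂ] ℂ) (s : Fin M →₀ ℕ) :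
    (genPoly L M).coeff s = L (∏ j, elemSym N (s j)) := by
  rw [genPoly, MvPolynomial.coeff_sum]
  simp only [MvPolynomial.coeff_monomial, Equiv.symm_apply_eq]
  rw [Finset.sum_ite_eq']
  split_ifs with h
  · rfl
  · simp only [Fintype.mem_piFinset, Finset.mem_range, not_forall] at h
    obtain ⟨j, hj⟩ := h
    rw [Finset.prod_eq_zero (Finset.mem_univ j), map_zero]
    exact elemSym_eq_zero (by simpa using hj)

theorem apply_prod_sum_smul_elemSym (L : MatPoly N →ₗ[ℂ] ℂ) (w : Fin M → ℕ → ℂ) :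
    L (∏ j, ∑ r ∈ Finset.range (N + 1), w j r • elemSym N r) =
      ∑ r ∈ Fintype.piFinset fun _ : Fin M => Finset.range (N + 1),
        (∏ j, w j (r j)) * L (∏ j, elemSym N (r j)) := by
  rw [Finset.prod_univ_sum, map_sum]
  refine Finset.sum_congr rfl fun r _ => ?_
  rw [Finset.prod_smul, map_smul, smul_eq_mul]

theorem eval_monomial_equivFunOnFinite (a : Fin M → ℂ) (r : Fin M → ℕ) (c : ℂ) :
    MvPolynomial.eval a (MvPolynomial.monomial (Finsupp.equivFunOnFinite.symm r) c) =
      c * ∏ j, a j ^ r j := by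
  rw [MvPolynomial.eval_monomial, Finsupp.prod_fintype _ _ fun i => pow_zero _]
  simp

theorem eval_genPoly (L : MatPoly N →ₗ[ℂ] ℂ) (a : Fin M → ℂ) :
    MvPolynomial.eval a (genPoly L M) = L (∏ j, detE N (a j)) := by
  simp only [detE_eq_sum]
  rw [apply_prod_sum_smul_elemSym L fun j r => a j ^ r, genPoly, map_sum]
  refine Finset.sum_congr rfl fun r _ => ?_
  rw [eval_monomial_equivFunOnFinite, mul_comm]

theorem apply_prod_erase_mul_sum (L : MatPoly N →ₗ[ℂ] ℂ) (a : Fin M → ℂ) (i : Fin M)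
    (w : ℕ → ℂ) :
    L ((∏ l ∈ Finset.univ.erase i, detE N (a l)) *
        ∑ r ∈ Finset.range (N + 1), (w r * a i ^ r) • elemSym N r) =
      ∑ r ∈ Fintype.piFinset fun _ : Fin M => Finset.range (N + 1),
        (w (r i) * ∏ j, a j ^ r j) * L (∏ j, elemSym N (r j)) := by
  have h1 : (∏ l ∈ Finset.univ.erase i, detE N (a l)) *
      ∑ r ∈ Finset.range (N + 1), (w r * a i ^ r) • elemSym N r =
      ∏ j, ∑ r ∈ Finset.range (N + 1), ((if j = i then w r else 1) * a j ^ r) • elemSym N r := by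
    rw [← Finset.prod_erase_mul _ _ (Finset.mem_univ i)]
    congr 1
    · refine Finset.prod_congr rfl fun j hj => ?_
      simp [detE_eq_sum, Finset.ne_of_mem_erase hj]
    · simp
  rw [h1, apply_prod_sum_smul_elemSym L fun j r => (if j = i then w r else 1) * a j ^ r]
  refine Finset.sum_congr rfl fun r _ => ?_
  rw [Finset.prod_mul_distrib, Finset.prod_ite_eq']
  simp

theorem eval_delta_genPoly (L : MatPoly N →ₗ[ℂ] ℂ) (a : Fin M → ℂ) (i : Fin M) :
    MvPolynomial.eval a (delta i (genPoly L M)) =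
      L ((∏ l ∈ Finset.univ.erase i, detE N (a l)) * euler N (detE N (a i))) := by
  rw [euler_detE_eq_sum, apply_prod_erase_mul_sum L a i fun r => (r : ℂ), genPoly, map_sum, map_sum]
  refine Finset.sum_congr rfl fun r _ => ?_
  rw [delta_monomial, eval_monomial_equivFunOnFinite, Finsupp.equivFunOnFinite_symm_apply_apply]
  ring

theorem eval_delta_delta_genPoly (L : MatPoly N →ₗ[ℂ] ℂ) (a : Fin M → ℂ) (i : Fin M) :
    MvPolynomial.eval a (delta i (delta i (genPoly L M))) =
      L ((∏ l ∈ Finset.univ.erase i, detE N (a l)) * euler N (euler N (detE N (a i)))) := by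
  have h := apply_prod_erase_mul_sum L a i fun r => (r : ℂ) * r
  simp only [mul_assoc] at h
  rw [euler_euler_detE_eq_sum, h, genPoly, map_sum, map_sum, map_sum]
  refine Finset.sum_congr rfl fun r _ => ?_
  rw [delta_monomial, delta_monomial, eval_monomial_equivFunOnFinite,
    Finsupp.equivFunOnFinite_symm_apply_apply]
  ring

theorem apply_matW_mul_matW (L : MatPoly N →ₗ[ℂ] ℂ) {a : Fin M → ℂ} {i j : Fin M} (hij : i ≠ j) :
    (a i - a j) * L ((∏ l ∈ (Finset.univ.erase j).erase i, detE N (a l)) *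
        (matW N (a j) * matW N (a i)).trace) =
      a i * MvPolynomial.eval a (delta j (genPoly L M)) -
        a j * MvPolynomial.eval a (delta i (genPoly L M)) := by
  have hi : ∏ l ∈ Finset.univ.erase j, detE N (a l) =
      (∏ l ∈ (Finset.univ.erase j).erase i, detE N (a l)) * detE N (a i) :=
    (Finset.prod_erase_mul _ _ (Finset.mem_erase.2 ⟨hij, Finset.mem_univ i⟩)).symm
  have hj : ∏ l ∈ Finset.univ.erase i, detE N (a l) =
      (∏ l ∈ (Finset.univ.erase j).erase i, detE N (a l)) * detE N (a j) := by
    rw [Finset.erase_right_comm]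
    exact (Finset.prod_erase_mul _ _ (Finset.mem_erase.2 ⟨hij.symm, Finset.mem_univ j⟩)).symm
  have hL : ∀ (c : ℂ) (h : MatPoly N), c * L h = L (c • h) :=
    fun c h => by rw [map_smul, smul_eq_mul]
  rw [eval_delta_genPoly, eval_delta_genPoly, hi, hj, hL, hL, hL, ← map_sub]
  refine congrArg _ ?_
  rw [← mul_smul_comm, trace_matW_mul_matW, mul_sub, mul_smul_comm, mul_smul_comm]
  refine congrArg₂ (fun u v => a i • u - a j • v) ?_ ?_
  · rw [mul_comm (euler N (detE N (a j))), mul_assoc]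
  · rw [mul_assoc]

section Haar

variable (μ : Measure (Matrix.unitaryGroup (Fin N) ℂ)) [IsFiniteMeasure μ]
  [μ.IsMulLeftInvariant] (k : ℕ)

theorem sum_delta_genPoly :
    ∑ i, delta i (genPoly (detFunctional μ k) M) =
      (k * N : ℂ) • genPoly (detFunctional μ k) M := by
  refine MvPolynomial.funext fun a => ?_
  rw [map_sum]
  simp only [eval_delta_genPoly, MvPolynomial.smul_eval, eval_genPoly]
  rw [← detFunctional_euler, derivation_prod, map_sum]

/-- The Casimir equation for the generating polynomial, at points with distinct coordinates. -/
theorem casimir_genPoly {a : Fin M → ℂ} (ha : Function.Injective a) :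
    ∑ i, MvPolynomial.eval a (delta i (delta i (genPoly (detFunctional μ k) M))) +
      2 * ∑ i, MvPolynomial.eval a (delta i (genPoly (detFunctional μ k) M)) *
        ∑ j ∈ Finset.univ.erase i, a i / (a i - a j) =
      (k * N * (N + 2 * M - k - 1) : ℂ) * MvPolynomial.eval a (genPoly (detFunctional μ k) M) := by
  have hc := detFunctional_casimir μ k (∏ j, detE N (a j))
  rw [detFunctional_euler, ← eval_genPoly, casimir_prod_detE] at hc
  have hs : ∑ i, MvPolynomial.eval a (delta i (genPoly (detFunctional μ k) M)) =
      (k * N : ℂ) * MvPolynomial.eval a (genPoly (detFunctional μ k) M) := by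
    rw [← map_sum, sum_delta_genPoly, MvPolynomial.smul_eval]
  set A : Fin M → ℂ := fun i => MvPolynomial.eval a (delta i (genPoly (detFunctional μ k) M)) with hA
  have hcross : ∀ j, ∀ i ∈ Finset.univ.erase j,
      detFunctional μ k ((∏ l ∈ (Finset.univ.erase j).erase i, detE N (a l)) *
        (matW N (a j) * matW N (a i)).trace) =
      (A j - A j * (a j / (a j - a i))) + (A i - A i * (a i / (a i - a j))) := by
    intro j i hi
    have hij : i ≠ j := Finset.ne_of_mem_erase hi
    have h0 : a i - a j ≠ 0 := sub_ne_zero.2 fun h => hij (ha h)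
    have h0' : a j - a i ≠ 0 := sub_ne_zero.2 fun h => hij (ha h).symm
    refine mul_left_cancel₀ h0 ?_
    rw [apply_matW_mul_matW _ hij]
    change a i * A j - a j * A i = _
    rw [← neg_sub (a i) (a j)]
    field_simp
    ring
  have hswap : ∀ F : Fin M → Fin M → ℂ, ∑ j, ∑ i ∈ Finset.univ.erase j, F i j =
      ∑ j, ∑ i ∈ Finset.univ.erase j, F j i := by
    intro F
    exact Finset.sum_comm' (by simp [eq_comm])
  have hcount : ∀ j : Fin M, ∑ i ∈ Finset.univ.erase j, A j = (M - 1 : ℂ) * A j := by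
    intro j
    have hM : 1 ≤ M := Nat.one_le_of_lt j.2
    rw [Finset.sum_const, Finset.card_erase_of_mem (Finset.mem_univ j), Finset.card_univ,
      Fintype.card_fin, nsmul_eq_mul, Nat.cast_sub hM, Nat.cast_one]
  have hdiag : ∀ j, detFunctional μ k ((∏ l ∈ Finset.univ.erase j, detE N (a l)) *
      ((N + 1 : ℂ) • euler N (detE N (a j)) - euler N (euler N (detE N (a j))))) =
      (N + 1 : ℂ) * A j -
        MvPolynomial.eval a (delta j (delta j (genPoly (detFunctional μ k) M))) := by
    intro j
    rw [mul_sub, map_sub, mul_smul_comm, map_smul, ← eval_delta_genPoly,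
      ← eval_delta_delta_genPoly, smul_eq_mul]
  rw [map_add, map_sum, map_sum, Finset.sum_congr rfl fun j _ => hdiag j] at hc
  simp only [map_sum] at hc
  rw [Finset.sum_congr rfl fun j _ => Finset.sum_congr rfl (hcross j)] at hc
  simp only [Finset.sum_add_distrib, Finset.sum_sub_distrib] at hc
  rw [hswap fun i j => A i, hswap fun i j => A i * (a i / (a i - a j))] at hc
  simp only [hcount, ← Finset.mul_sum, hs] at hc ⊢
  linear_combination -hc

/-- The product of the Vandermonde polynomial with the generating polynomial is an eigenfunction
of `∑ (X_i ∂/∂X_i)²`. -/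
theorem sum_delta_delta_vdm_mul_genPoly :
    ∑ i, delta i (delta i (vdm M * genPoly (detFunctional μ k) M)) =
      (∑ i : Fin M, (i : ℂ) ^ 2 + k * N * (N + 2 * M - k - 1)) •
        (vdm M * genPoly (detFunctional μ k) M) := by
  refine mul_left_cancel₀ vdm_ne_zero (MvPolynomial.funext fun a => ?_)
  rw [map_mul, map_mul]
  by_cases ha : Function.Injective a
  · congr 1
    have hcas := casimir_genPoly (M := M) μ k ha
    have hv : ∑ i, MvPolynomial.eval a (delta i (delta i (vdm M))) =
        (∑ i : Fin M, (i : ℂ) ^ 2) * MvPolynomial.eval a (vdm M) := by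
      rw [← map_sum, sum_delta_delta_vdm, MvPolynomial.smul_eval]
    set P := genPoly (detFunctional μ k) M
    have h1 : ∀ i, MvPolynomial.eval a (delta i (delta i (vdm M * P))) =
        MvPolynomial.eval a P * MvPolynomial.eval a (delta i (delta i (vdm M))) +
        MvPolynomial.eval a (vdm M) * (MvPolynomial.eval a (delta i (delta i P)) +
          2 * (MvPolynomial.eval a (delta i P) *
            ∑ j ∈ Finset.univ.erase i, a i / (a i - a j))) := by
      intro i
      simp only [Derivation.leibniz, map_add, smul_eq_mul, map_mul, eval_delta_vdm ha]
      ring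
    rw [map_sum, Finset.sum_congr rfl fun i _ => h1 i, Finset.sum_add_distrib, ← Finset.mul_sum,
      ← Finset.mul_sum, Finset.sum_add_distrib, ← Finset.mul_sum, hcas, hv, MvPolynomial.smul_eval,
      map_mul]
    ring
  · have h0 : MvPolynomial.eval a (vdm M) = 0 := by
      rw [eval_vdm]
      by_contra h
      exact ha (Matrix.det_vandermonde_ne_zero_iff.1 h)
    rw [h0, zero_mul, zero_mul]

theorem sum_delta_vdm_mul_genPoly :
    ∑ i, delta i (vdm M * genPoly (detFunctional μ k) M) =
      (∑ i : Fin M, (i : ℂ) + k * N) • (vdm M * genPoly (detFunctional μ k) M) := by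
  simp only [Derivation.leibniz, Finset.sum_add_distrib, smul_eq_mul]
  rw [← Finset.mul_sum, ← Finset.mul_sum, sum_delta_genPoly, sum_delta_vdm, add_smul,
    mul_smul_comm, mul_smul_comm, mul_comm (genPoly _ _), add_comm]

theorem sum_sq_of_coeff_ne_zero {s : Fin M →₀ ℕ}
    (hs : (vdm M * genPoly (detFunctional μ k) M).coeff s ≠ 0) :
    ∑ i, (s i : ℂ) ^ 2 = ∑ i : Fin M, (i : ℂ) ^ 2 + k * N * (N + 2 * M - k - 1) := by
  have h := congrArg (MvPolynomial.coeff s) (sum_delta_delta_vdm_mul_genPoly (M := M) μ k)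
  rw [MvPolynomial.coeff_sum, MvPolynomial.coeff_smul, smul_eq_mul] at h
  simp only [coeff_delta, ← mul_assoc, ← Finset.sum_mul, ← sq] at h
  exact mul_right_cancel₀ hs h

theorem sum_of_coeff_ne_zero {s : Fin M →₀ ℕ}
    (hs : (vdm M * genPoly (detFunctional μ k) M).coeff s ≠ 0) :
    ∑ i, (s i : ℂ) = ∑ i : Fin M, (i : ℂ) + k * N := by
  have h := congrArg (MvPolynomial.coeff s) (sum_delta_vdm_mul_genPoly (M := M) μ k)
  rw [MvPolynomial.coeff_sum, MvPolynomial.coeff_smul, smul_eq_mul] at h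
  simp only [coeff_delta, ← Finset.sum_mul] at h
  exact mul_right_cancel₀ hs h

end Haar

end GeneratingPolynomial

section Bialternant

variable {N M k : ℕ}

/-- The Jacobi–Trudi type matrix of coefficients of `det (1 + T Θ)` attached to exponents `s`. -/
noncomputable def jacobiTrudi (N : ℕ) (s : Fin M → ℕ) : Matrix (Fin M) (Fin M) (MatPoly N) :=
  Matrix.of fun i j => if (j : ℕ) ≤ s i then elemSym N (s i - j) else 0

theorem coeff_vdm_mul_genPoly (L : MatPoly N →ₗ[ℂ] ℂ) (s : Fin M →₀ ℕ) :
    (vdm M * genPoly L M).coeff s = L (jacobiTrudi N s).det := by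
  rw [vdm_eq_sum, Finset.sum_mul, MvPolynomial.coeff_sum, ← Matrix.det_transpose,
    Matrix.det_apply', map_sum]
  refine Finset.sum_congr rfl fun σ _ => ?_
  rw [MvPolynomial.coeff_monomial_mul', coeff_genPoly]
  have hsmul : ∀ h : MatPoly N, L (((Equiv.Perm.sign σ : ℤ) : MatPoly N) * h) =
      ((Equiv.Perm.sign σ : ℤ) : ℂ) * L h := by
    intro h
    rw [← zsmul_eq_mul, map_zsmul, zsmul_eq_mul]
  rw [hsmul]
  split_ifs with h
  · congr 2
    refine Finset.prod_congr rfl fun i _ => ?_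
    have hi : ((σ i : Fin M) : ℕ) ≤ s i := h i
    simp [jacobiTrudi, hi]
  · obtain ⟨i, hi⟩ : ∃ i, ¬ ((σ i : Fin M) : ℕ) ≤ s i := by
      by_contra hcon
      push Not at hcon
      exact h fun i => hcon i
    rw [Finset.prod_eq_zero (Finset.mem_univ i), map_zero, mul_zero]
    simp only [jacobiTrudi, Matrix.transpose_apply, Matrix.of_apply, if_neg hi]

theorem injective_of_det_jacobiTrudi_ne_zero {s : Fin M → ℕ} (h : (jacobiTrudi N s).det ≠ 0) :
    Function.Injective s := by
  intro i j hij
  by_contra hne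
  refine h (Matrix.det_zero_of_row_eq hne ?_)
  funext l
  simp [jacobiTrudi, hij]

theorem lt_of_det_jacobiTrudi_ne_zero {s : Fin M → ℕ} (h : (jacobiTrudi N s).det ≠ 0)
    (i : Fin M) : s i < N + M := by
  by_contra hi
  refine h (Matrix.det_eq_zero_of_row_eq_zero i fun j => ?_)
  have := j.2
  simp only [jacobiTrudi, Matrix.of_apply]
  rw [elemSym_eq_zero (by omega), ite_self]

/-- The rectangular partition `(N^k)`, in weakly increasing order and padded with `k` zeros. -/
def rect (k N : ℕ) (j : Fin (k + k)) : ℕ := if (j : ℕ) < k then 0 else N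

/-- The rectangular partition shifted by the staircase. -/
def rectShift (k N : ℕ) (j : Fin (k + k)) : ℕ := rect k N j + j

theorem rectShift_injective : Function.Injective (rectShift k N) := by
  intro i j h
  simp only [rectShift, rect] at h
  ext
  split_ifs at h <;> omega

theorem elemSym_zero : elemSym N 0 = 1 := by
  have h := Polynomial.coeff_det_X_add_C_zero (genericMat N) 1
  rw [elemSym, detPoly, add_comm]
  simpa using h

theorem elemSym_self : elemSym N N = (genericMat N).det := by
  have h := Polynomial.coeff_det_X_add_C_card (genericMat N) 1
  rw [elemSym, detPoly, add_comm]
  simpa using h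

theorem det_jacobiTrudi_rectShift :
    (jacobiTrudi N (rectShift k N)).det = (genericMat N).det ^ k := by
  have hblock : (jacobiTrudi N (rectShift k N)).submatrix finSumFinEquiv finSumFinEquiv =
      Matrix.fromBlocks
        (Matrix.of fun i j : Fin k => if (j : ℕ) ≤ i then elemSym N (i - j) else 0) 0 0
        (Matrix.of fun i j : Fin k => if (j : ℕ) ≤ N + i then elemSym N (N + i - j) else 0) := by
    refine Matrix.ext fun i j => ?_
    rcases i with i | i <;> rcases j with j | j
    · simp [jacobiTrudi, rectShift, rect]
    · have : ¬ (j : ℕ) + k ≤ i := by omega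
      simp [jacobiTrudi, rectShift, rect, this]
    · have : N < N + ((i : ℕ) + k) - j := by omega
      simp [jacobiTrudi, rectShift, rect, elemSym_eq_zero this]
    · have h1 : ((j : ℕ) + k ≤ N + (i + k)) ↔ (j : ℕ) ≤ N + i := by omega
      have h2 : N + ((i : ℕ) + k) - (j + k) = N + i - j := by omega
      simp [jacobiTrudi, rectShift, rect, h1, h2]
  rw [← Matrix.det_submatrix_equiv_self finSumFinEquiv, hblock, Matrix.det_fromBlocks_zero₂₁,
    Matrix.det_of_isLowerTriangular, Matrix.det_of_isUpperTriangular]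
  · simp [elemSym_zero, elemSym_self]
  · intro i j hij
    have hij' : (j : ℕ) < i := hij
    have : N < N + (i : ℕ) - j := by omega
    simp [elemSym_eq_zero this]
  · intro i j hij
    have hij' : (i : ℕ) < j := hij
    rw [Matrix.of_apply, if_neg hij'.not_ge]

/-- The exponents of the rectangular alternant are determined by their first two power sums. -/
theorem exists_perm_of_sum_eq {s : Fin (k + k) → ℕ} (hs : Function.Injective s)
    (hlt : ∀ i, s i < N + (k + k)) (h1 : ∑ i, (s i : ℤ) = ∑ i, (rectShift k N i : ℤ))
    (h2 : ∑ i, (s i : ℤ) ^ 2 = ∑ i, (rectShift k N i : ℤ) ^ 2) :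
    ∃ σ : Equiv.Perm (Fin (k + k)), ∀ i, s i = rectShift k N (σ i) := by
  classical
  let q : ℕ → ℤ := fun x => (2 * x - 2 * k + 1) * (2 * x - 2 * N - 2 * k + 1)
  have hq : ∀ t : Fin (k + k) → ℕ, ∑ i, q (t i) = 4 * ∑ i, (t i : ℤ) ^ 2 +
      (4 - 8 * k - 4 * N) * ∑ i, (t i : ℤ) + (k + k) * ((1 - 2 * k) * (1 - 2 * N - 2 * k)) := by
    intro t
    have : ∀ i, q (t i) = 4 * (t i : ℤ) ^ 2 + (4 - 8 * k - 4 * N) * (t i : ℤ) +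
        (1 - 2 * k) * (1 - 2 * N - 2 * k) := fun i => by simp only [q]; ring
    rw [Finset.sum_congr rfl fun i _ => this i, Finset.sum_add_distrib, Finset.sum_add_distrib,
      ← Finset.mul_sum, ← Finset.mul_sum]
    simp
  set T := Finset.univ.image s with hT
  set T' := Finset.univ.image (rectShift k N) with hT'
  have hsum : ∑ x ∈ T, q x = ∑ x ∈ T', q x := by
    rw [hT, hT', Finset.sum_image hs.injOn, Finset.sum_image rectShift_injective.injOn, hq, hq,
      h1, h2]
  have hcard : T.card = T'.card := by
    rw [hT, hT', Finset.card_image_of_injective _ hs,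
      Finset.card_image_of_injective _ rectShift_injective]
  have hpos : ∀ x ∈ T', 0 < q x := by
    intro x hx
    obtain ⟨i, -, rfl⟩ := Finset.mem_image.1 hx
    simp only [q, rectShift, rect]
    split_ifs with hi
    · refine mul_pos_of_neg_of_neg ?_ ?_ <;> push_cast <;> omega
    · refine mul_pos ?_ ?_ <;> push_cast <;> omega
  have hneg : ∀ x ∈ T \ T', q x < 0 := by
    intro x hx
    obtain ⟨hx1, hx2⟩ := Finset.mem_sdiff.1 hx
    obtain ⟨i, -, rfl⟩ := Finset.mem_image.1 hx1
    have hi := hlt i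
    have hlow : k ≤ s i := by
      by_contra hcon
      refine hx2 (Finset.mem_image.2 ⟨⟨s i, by omega⟩, Finset.mem_univ _, ?_⟩)
      simp only [rectShift, rect]
      rw [if_pos (by omega), zero_add]
    have hhigh : s i < N + k := by
      by_contra hcon
      refine hx2 (Finset.mem_image.2 ⟨⟨s i - N, by omega⟩, Finset.mem_univ _, ?_⟩)
      simp only [rectShift, rect]
      rw [if_neg (by omega)]
      omega
    refine mul_neg_of_pos_of_neg ?_ ?_ <;> omega
  have hdiff : ∑ x ∈ T \ T', q x = ∑ x ∈ T' \ T, q x := by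
    have e1 := Finset.sum_inter_add_sum_sdiff T T' q
    have e2 := Finset.sum_inter_add_sum_sdiff T' T q
    rw [Finset.inter_comm] at e2
    linarith
  have hsub : T ⊆ T' := by
    rw [← Finset.sdiff_eq_empty_iff_subset]
    by_contra hne
    have hlt0 : ∑ x ∈ T \ T', q x < 0 :=
      Finset.sum_neg hneg (Finset.nonempty_iff_ne_empty.2 hne)
    have hge : 0 ≤ ∑ x ∈ T' \ T, q x :=
      Finset.sum_nonneg fun x hx => (hpos x (Finset.mem_sdiff.1 hx).1).le
    linarith
  have hTT : T = T' := Finset.eq_of_subset_of_card_le hsub hcard.ge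
  have hrange : Set.range s = Set.range (rectShift k N) := by
    have := congrArg (fun F : Finset ℕ => (F : Set ℕ)) hTT
    simpa [hT, hT'] using this
  refine ⟨((Equiv.ofInjective s hs).trans (Equiv.setCongr hrange)).trans
    (Equiv.ofInjective _ rectShift_injective).symm, fun i => ?_⟩
  rw [Equiv.trans_apply, Equiv.apply_ofInjective_symm rectShift_injective]
  rfl

theorem det_pow_eq_sum (t : Fin M → ℕ) :
    (Matrix.of fun i j => (MvPolynomial.X i : MvPolynomial (Fin M) ℂ) ^ t j).det =
      ∑ σ : Equiv.Perm (Fin M), MvPolynomial.monomial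
        (Finsupp.equivFunOnFinite.symm fun i => t (σ i)) ((Equiv.Perm.sign σ : ℤ) : ℂ) := by
  rw [← Matrix.det_transpose, Matrix.det_apply']
  refine Finset.sum_congr rfl fun σ _ => ?_
  rw [MvPolynomial.monomial_eq, Finsupp.prod_fintype _ _ fun i => pow_zero _]
  simp

theorem detFunctional_det_pow (μ : Measure (Matrix.unitaryGroup (Fin N) ℂ))
    [IsProbabilityMeasure μ] (k : ℕ) : detFunctional μ k ((genericMat N).det ^ k) = 1 := by
  change ∫ θ, _ ∂μ = 1
  have h : ∀ θ : Matrix.unitaryGroup (Fin N) ℂ,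
      star (evalMat (θ : Matrix (Fin N) (Fin N) ℂ) ((genericMat N).det ^ k)) *
        evalMat (θ : Matrix (Fin N) (Fin N) ℂ) ((genericMat N).det ^ k) = 1 := by
    intro θ
    rw [map_pow, evalMat_det, star_pow, ← mul_pow]
    have := (Unitary.mem_iff.1 (Matrix.det_of_mem_unitary θ.2)).1
    rw [this, one_pow]
  rw [integral_congr_ae (Filter.Eventually.of_forall h)]
  simp

/-- The generating polynomial is the Schur polynomial of the rectangle. -/
theorem vdm_mul_genPoly (μ : Measure (Matrix.unitaryGroup (Fin N) ℂ)) [IsProbabilityMeasure μ]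
    [μ.IsMulLeftInvariant] (k : ℕ) :
    vdm (k + k) * genPoly (detFunctional μ k) (k + k) =
      (Matrix.of fun i j => (MvPolynomial.X i : MvPolynomial (Fin (k + k)) ℂ) ^
        rectShift k N j).det := by
  have hperm : ∀ (s : Fin (k + k) →₀ ℕ) (σ : Equiv.Perm (Fin (k + k))),
      (∀ i, s i = rectShift k N (σ i)) →
      (vdm (k + k) * genPoly (detFunctional μ k) (k + k)).coeff s =
        ((Equiv.Perm.sign σ : ℤ) : ℂ) := by
    intro s σ hs
    have hsub : jacobiTrudi N s = (jacobiTrudi N (rectShift k N)).submatrix σ id := by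
      refine Matrix.ext fun i j => ?_
      simp [jacobiTrudi, hs]
    rw [coeff_vdm_mul_genPoly, hsub, Matrix.det_permute, det_jacobiTrudi_rectShift,
      ← zsmul_eq_mul, map_zsmul, detFunctional_det_pow, zsmul_eq_mul, mul_one]
  have hne0 : (vdm (k + k) * genPoly (detFunctional μ k) (k + k)).coeff
      (Finsupp.equivFunOnFinite.symm (rectShift k N)) ≠ 0 := by
    rw [hperm _ 1 fun i => rfl]
    simp
  rw [det_pow_eq_sum]
  refine MvPolynomial.ext _ _ fun s => ?_
  rw [MvPolynomial.coeff_sum]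
  simp only [MvPolynomial.coeff_monomial]
  by_cases hs : ∃ σ : Equiv.Perm (Fin (k + k)), ∀ i, s i = rectShift k N (σ i)
  · obtain ⟨σ, hσ⟩ := hs
    rw [hperm s σ hσ, Finset.sum_eq_single σ]
    · rw [if_pos]
      ext i
      simp [hσ]
    · intro τ _ hτ
      rw [if_neg]
      intro h
      refine hτ (Equiv.ext fun i => rectShift_injective (N := N) ?_)
      rw [← hσ i, ← h]
      rfl
    · simp
  · rw [Finset.sum_eq_zero]
    · by_contra hne
      have hdet : (jacobiTrudi N s).det ≠ 0 := by
        intro h0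
        rw [coeff_vdm_mul_genPoly, h0, map_zero] at hne
        exact hne rfl
      have e1 := (sum_of_coeff_ne_zero μ k hne).trans (sum_of_coeff_ne_zero μ k hne0).symm
      have e2 := (sum_sq_of_coeff_ne_zero μ k hne).trans (sum_sq_of_coeff_ne_zero μ k hne0).symm
      refine hs (exists_perm_of_sum_eq (injective_of_det_jacobiTrudi_ne_zero hdet)
        (lt_of_det_jacobiTrudi_ne_zero hdet) ?_ ?_)
      · exact_mod_cast e1
      · exact_mod_cast e2
    · intro τ _
      rw [if_neg]
      intro h
      exact hs ⟨τ, fun i => by rw [← h]; rfl⟩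

end Bialternant

section Branching

variable {R S : Type*} [CommRing R] [CommRing S]

/-- The Schur polynomial attached to a weakly increasing sequence of exponents, defined by the
branching rule. -/
def branch : (M : ℕ) → (Fin M → ℕ) → (Fin M → R) → R
  | 0, _, _ => 1
  | M + 1, lam, x => x 0 ^ lam 0 *
      ∑ ν ∈ Fintype.piFinset fun j : Fin M => Finset.Icc (lam j.castSucc) (lam j.succ),
        (∏ j, x 0 ^ (lam j.succ - ν j)) * branch M ν (Fin.tail x)

theorem map_branch (f : R →+* S) (M : ℕ) (lam : Fin M → ℕ) (x : Fin M → R) :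
    f (branch M lam x) = branch M lam fun i => f (x i) := by
  induction M with
  | zero => simp [branch]
  | succ M ih =>
    simp only [branch, map_mul, map_sum, map_pow, map_prod, ih]
    rfl

theorem sum_Icc_pow_mul_pow (a b : R) {p q : ℕ} (h : p ≤ q) (j : ℕ) :
    (b - a) * ∑ ν ∈ Finset.Icc p q, a ^ (q - ν) * b ^ (ν + j) =
      b ^ (q + (j + 1)) - a ^ (q - p + 1) * b ^ (p + j) := by
  obtain ⟨d, rfl⟩ := Nat.exists_eq_add_of_le h
  have hsum : ∑ ν ∈ Finset.Icc p (p + d), a ^ (p + d - ν) * b ^ (ν + j) =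
      (∑ i ∈ Finset.range (d + 1), b ^ i * a ^ (d + 1 - 1 - i)) * b ^ (p + j) := by
    rw [← Finset.Ico_succ_right_eq_Icc, Finset.sum_Ico_eq_sum_range, Finset.sum_mul]
    refine Finset.sum_congr (by rw [Order.succ_eq_add_one]; congr 1; omega) fun i hi => ?_
    rw [show p + d - (p + i) = d + 1 - 1 - i by omega]
    ring
  rw [hsum, ← mul_assoc, mul_comm (b - a), geom_sum₂_mul, Nat.add_sub_cancel_left]
  ring

theorem det_vandermonde_succ {M : ℕ} (x : Fin (M + 1) → R) :
    (Matrix.vandermonde x).det =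
      (∏ i, (Fin.tail x i - x 0)) * (Matrix.vandermonde (Fin.tail x)).det := by
  rw [Matrix.det_vandermonde, Matrix.det_vandermonde, Fin.prod_univ_succ, Fin.prod_Ioi_zero]
  simp only [Fin.prod_Ioi_succ]
  rfl

theorem monotone_of_mem_piFinset {M : ℕ} {lam : Fin (M + 1) → ℕ} {ν : Fin M → ℕ}
    (hν : ν ∈ Fintype.piFinset fun j : Fin M => Finset.Icc (lam j.castSucc) (lam j.succ)) :
    Monotone ν := by
  rcases M with _ | M
  · exact fun i => i.elim0
  · refine Fin.monotone_iff_le_succ.2 fun i => ?_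
    have h1 := (Finset.mem_Icc.1 (Fintype.mem_piFinset.1 hν i.castSucc)).2
    have h2 := (Finset.mem_Icc.1 (Fintype.mem_piFinset.1 hν i.succ)).1
    rw [Fin.succ_castSucc] at h1
    exact h1.trans h2

/-- The bialternant formula. -/
theorem det_pow_eq_vandermonde_mul_branch (M : ℕ) {lam : Fin M → ℕ} (hlam : Monotone lam)
    (x : Fin M → R) :
    (Matrix.of fun i j => x i ^ (lam j + j)).det = (Matrix.vandermonde x).det * branch M lam x := by
  induction M with
  | zero => simp [branch]
  | succ M ih =>
    let g : Fin M → ℕ → Fin M → R := fun j ν i => x 0 ^ (lam j.succ - ν) * Fin.tail x i ^ (ν + j)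
    let I : Fin M → Finset ℕ := fun j => Finset.Icc (lam j.castSucc) (lam j.succ)
    let B : Matrix (Fin (M + 1)) (Fin (M + 1)) R := Matrix.of fun i j =>
      Fin.cases (x i ^ lam 0) (fun j' => x i ^ (lam j'.succ + (j' + 1)) -
        x 0 ^ (lam j'.succ - lam j'.castSucc + 1) * x i ^ (lam j'.castSucc + j')) j
    have hB : (Matrix.of fun i j => x i ^ (lam j + j)).det = B.det := by
      refine Matrix.det_eq_of_forall_col_eq_smul_add_pred
        (fun j => x 0 ^ (lam j.succ - lam j.castSucc + 1)) (fun i => ?_) fun i j => ?_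
      · simp [B]
      · simp [B]
    have hrow : ∀ j : Fin M, B 0 j.succ = 0 := by
      intro j
      have hj : lam j.castSucc ≤ lam j.succ := hlam (Fin.castSucc_lt_succ).le
      simp only [B, Matrix.of_apply, Fin.cases_succ, ← pow_add]
      rw [sub_eq_zero]
      congr 1
      omega
    have hminor : B.submatrix Fin.succ (Fin.succAbove 0) = Matrix.of fun i j : Fin M =>
        (Fin.tail x i - x 0) * (Matrix.of fun j => ∑ ν ∈ I j, g j ν).transpose i j := by
      refine Matrix.ext fun i j => ?_
      have hj : lam j.castSucc ≤ lam j.succ := hlam (Fin.castSucc_lt_succ).le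
      simp only [Matrix.submatrix_apply, Fin.succAbove_zero, B, Matrix.of_apply, Fin.cases_succ,
        Matrix.transpose_apply, Finset.sum_apply, g, I]
      rw [sum_Icc_pow_mul_pow _ _ hj]
      rfl
    have hexp : (Matrix.of fun j => ∑ ν ∈ I j, g j ν).det = ∑ ν ∈ Fintype.piFinset I,
        (∏ j, x 0 ^ (lam j.succ - ν j)) *
          ((Matrix.vandermonde (Fin.tail x)).det * branch M ν (Fin.tail x)) := by
      have h1 := (Matrix.detRowAlternating (R := R) (n := Fin M)).toMultilinearMap.map_sum_finset g I
      refine h1.trans (Finset.sum_congr rfl fun ν hν => ?_)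
      rw [← ih (monotone_of_mem_piFinset hν), ← Matrix.det_mul_row, ← Matrix.det_transpose]
      rfl
    rw [hB, Matrix.det_succ_row_zero, Fin.sum_univ_succ, Finset.sum_eq_zero fun j _ => by
      rw [hrow]; ring, hminor, Matrix.det_mul_column, Matrix.det_transpose, hexp,
      det_vandermonde_succ, branch]
    have h00 : B 0 0 = x 0 ^ lam 0 := rfl
    rw [h00, Finset.mul_sum, Finset.mul_sum, Finset.mul_sum, Finset.mul_sum]
    simp only [Fin.val_zero, pow_zero, one_mul, add_zero]
    refine Finset.sum_congr rfl fun ν _ => ?_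
    ring

end Branching

theorem rect_monotone (k N : ℕ) : Monotone (rect k N) := by
  intro i j hij
  have : (i : ℕ) ≤ j := hij
  simp only [rect]
  split_ifs <;> omega

/-- The generating polynomial is the Schur polynomial of the rectangle `(N^k)`. -/
theorem genPoly_eq_branch {N : ℕ} (μ : Measure (Matrix.unitaryGroup (Fin N) ℂ))
    [IsProbabilityMeasure μ] [μ.IsMulLeftInvariant] (k : ℕ) :
    genPoly (detFunctional μ k) (k + k) = branch (k + k) (rect k N) MvPolynomial.X :=
  mul_left_cancel₀ vdm_ne_zero <| (vdm_mul_genPoly μ k).trans <|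
    det_pow_eq_vandermonde_mul_branch (k + k) (rect_monotone k N) MvPolynomial.X

section Patterns

/-- `y` is the Gelfand–Tsetlin pattern with top row `lam`, drawn so that the rows of the pattern
are the antidiagonals of `y`. -/
structure IsPattern (M : ℕ) (lam : Fin M → ℕ) (y : ℕ → ℕ → ℕ) : Prop where
  zero : ∀ i j, M ≤ i + j → y i j = 0
  top : ∀ j : Fin M, y (M - 1 - j) j = lam j
  col : ∀ i j, i + j + 1 < M → y (i + 1) j ≤ y i j
  row : ∀ i j, i + j + 1 < M → y i j ≤ y i (j + 1)

theorem IsPattern.row_le {M : ℕ} {lam : Fin M → ℕ} {y : ℕ → ℕ → ℕ} (h : IsPattern M lam y)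
    (i j d : ℕ) (hd : i + j + d < M) : y i j ≤ y i (j + d) := by
  induction d with
  | zero => exact le_rfl
  | succ d ih => exact (ih (by omega)).trans (h.row i (j + d) (by omega))

theorem IsPattern.col_le {M : ℕ} {lam : Fin M → ℕ} {y : ℕ → ℕ → ℕ} (h : IsPattern M lam y)
    (i j d : ℕ) (hd : i + j + d < M) : y (i + d) j ≤ y i j := by
  induction d with
  | zero => exact le_rfl
  | succ d ih => exact (h.col (i + d) j (by omega)).trans (ih (by omega))

/-- Add a new top row to a pattern. -/
def addTop {M : ℕ} (lam : Fin (M + 1) → ℕ) (y : ℕ → ℕ → ℕ) (i j : ℕ) : ℕ :=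
  if h : i + j = M then lam ⟨j, by omega⟩ else y i j

open Classical in
/-- The finite set of Gelfand–Tsetlin patterns with top row `lam`. -/
noncomputable def patterns : (M : ℕ) → (Fin M → ℕ) → Finset (ℕ → ℕ → ℕ)
  | 0, _ => {fun _ _ => 0}
  | M + 1, lam => ((Fintype.piFinset fun j : Fin M =>
      Finset.Icc (lam j.castSucc) (lam j.succ)).sigma fun ν => patterns M ν).image
        fun p => addTop lam p.2

theorem addTop_of_lt {M : ℕ} (lam : Fin (M + 1) → ℕ) (y : ℕ → ℕ → ℕ) {i j : ℕ} (h : i + j < M) :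
    addTop lam y i j = y i j := dif_neg h.ne

theorem addTop_of_eq {M : ℕ} (lam : Fin (M + 1) → ℕ) (y : ℕ → ℕ → ℕ) {i j : ℕ} (h : i + j = M) :
    addTop lam y i j = lam ⟨j, by omega⟩ := dif_pos h

theorem isPattern_addTop {M : ℕ} {lam : Fin (M + 1) → ℕ} {ν : Fin M → ℕ} {y : ℕ → ℕ → ℕ}
    (hν : ∀ j : Fin M, lam j.castSucc ≤ ν j ∧ ν j ≤ lam j.succ) (hy : IsPattern M ν y) :
    IsPattern (M + 1) lam (addTop lam y) where
  zero i j h := by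
    rw [addTop, dif_neg (by omega)]
    exact hy.zero i j (by omega)
  top j := addTop_of_eq _ _ (by omega)
  col i j h := by
    rcases Nat.lt_or_ge (i + j + 1) M with h' | h'
    · rw [addTop_of_lt _ _ (by omega), addTop_of_lt _ _ (by omega)]
      exact hy.col i j h'
    · rw [addTop_of_eq _ _ (by omega), addTop_of_lt _ _ (by omega)]
      have h1 := (hν ⟨j, by omega⟩).1
      rw [← hy.top, show M - 1 - j = i by omega] at h1
      exact h1
  row i j h := by
    rcases Nat.lt_or_ge (i + j + 1) M with h' | h'
    · rw [addTop_of_lt _ _ (by omega), addTop_of_lt _ _ (by omega)]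
      exact hy.row i j h'
    · rw [addTop_of_eq (i := i) (j := j + 1) _ _ (by omega), addTop_of_lt _ _ (by omega)]
      have h1 := (hν ⟨j, by omega⟩).2
      rw [← hy.top, show M - 1 - j = i by omega] at h1
      exact h1

theorem IsPattern.exists_addTop {M : ℕ} {lam : Fin (M + 1) → ℕ} {y : ℕ → ℕ → ℕ}
    (hy : IsPattern (M + 1) lam y) : ∃ (ν : Fin M → ℕ) (z : ℕ → ℕ → ℕ),
      (∀ j : Fin M, lam j.castSucc ≤ ν j ∧ ν j ≤ lam j.succ) ∧ IsPattern M ν z ∧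
        addTop lam z = y := by
  refine ⟨fun j => y (M - 1 - j) j, fun i j => if i + j < M then y i j else 0, fun j => ?_, ?_, ?_⟩
  · have hj := j.2
    have h1 := hy.top j.castSucc
    have h2 := hy.top j.succ
    have h3 := hy.col (M - 1 - j) j (by omega)
    have h4 := hy.row (M - 1 - j) j (by omega)
    simp only [Fin.val_castSucc, Fin.val_succ] at h1 h2
    rw [← h1, ← h2]
    rw [show M + 1 - 1 - (j : ℕ) = M - 1 - j + 1 by omega,
      show M + 1 - 1 - ((j : ℕ) + 1) = M - 1 - j by omega]
    exact ⟨h3, h4⟩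
  · constructor
    · intro i j h
      rw [if_neg (by omega)]
    · intro j
      rw [if_pos (by omega)]
    · intro i j h
      rw [if_pos (by omega), if_pos (by omega)]
      exact hy.col i j (by omega)
    · intro i j h
      rw [if_pos (by omega), if_pos (by omega)]
      exact hy.row i j (by omega)
  · funext i j
    rcases Nat.lt_trichotomy (i + j) M with h | h | h
    · rw [addTop_of_lt _ _ h, if_pos h]
    · rw [addTop_of_eq _ _ h, ← hy.top]
      congr 1
      simp only
      omega
    · rw [addTop, dif_neg h.ne', if_neg (by omega), hy.zero i j (by omega)]

theorem mem_patterns {M : ℕ} {lam : Fin M → ℕ} {y : ℕ → ℕ → ℕ} :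
    y ∈ patterns M lam ↔ IsPattern M lam y := by
  induction M generalizing y with
  | zero =>
    rw [patterns, Finset.mem_singleton]
    constructor
    · rintro rfl
      exact ⟨fun _ _ _ => rfl, fun j => j.elim0, fun _ _ _ => le_rfl, fun _ _ _ => le_rfl⟩
    · exact fun h => funext fun i => funext fun j => h.zero i j (Nat.zero_le _)
  | succ M ih =>
    simp only [patterns, Finset.mem_image, Finset.mem_sigma, Fintype.mem_piFinset, Finset.mem_Icc,
      ih]
    constructor
    · rintro ⟨⟨ν, z⟩, ⟨hν, hz⟩, rfl⟩
      exact isPattern_addTop hν hz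
    · intro hy
      obtain ⟨ν, z, hν, hz, rfl⟩ := hy.exists_addTop
      exact ⟨⟨ν, z⟩, ⟨hν, hz⟩, rfl⟩

theorem sum_patterns_succ {A : Type*} [AddCommMonoid A] {M : ℕ} (lam : Fin (M + 1) → ℕ)
    (f : (ℕ → ℕ → ℕ) → A) :
    ∑ y ∈ patterns (M + 1) lam, f y =
      ∑ ν ∈ Fintype.piFinset fun j : Fin M => Finset.Icc (lam j.castSucc) (lam j.succ),
        ∑ y ∈ patterns M ν, f (addTop lam y) := by
  classical
  rw [patterns, Finset.sum_image, Finset.sum_sigma]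
  rintro ⟨ν, y⟩ hy ⟨ν', y'⟩ hy' h
  have hp : IsPattern M ν y := mem_patterns.1 (Finset.mem_sigma.1 hy).2
  have hp' : IsPattern M ν' y' := mem_patterns.1 (Finset.mem_sigma.1 hy').2
  have hyy : y = y' := by
    funext i j
    rcases Nat.lt_or_ge (i + j) M with hij | hij
    · have := congrFun (congrFun h i) j
      simpa only [addTop_of_lt _ _ hij] using this
    · rw [hp.zero i j hij, hp'.zero i j hij]
  subst hyy
  have : ν = ν' := funext fun j => by rw [← hp.top, ← hp'.top]
  subst this
  rfl

variable {R : Type*} [CommRing R]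

/-- The point whose last `k` coordinates are `T` and whose other coordinates are `1`. -/
def specPoint (k : ℕ) (T : R) (M : ℕ) (i : Fin M) : R := if (i : ℕ) + k < M then 1 else T

theorem tail_specPoint (k : ℕ) (T : R) (M : ℕ) :
    Fin.tail (specPoint k T (M + 1)) = specPoint k T M := by
  funext i
  have : ((i : ℕ) + 1 + k < M + 1) ↔ (i : ℕ) + k < M := by omega
  simp [Fin.tail, specPoint, this]

theorem branch_specPoint_of_le (k : ℕ) (T : R) (M : ℕ) (hM : M ≤ k) (lam : Fin M → ℕ) :
    branch M lam (specPoint k T M) = ∑ _y ∈ patterns M lam, T ^ ∑ j, lam j := by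
  induction M with
  | zero => simp [branch, patterns]
  | succ M ih =>
    have h0 : specPoint k T (M + 1) 0 = T := if_neg (by simp; omega)
    rw [branch, tail_specPoint, h0, sum_patterns_succ, Finset.mul_sum]
    refine Finset.sum_congr rfl fun ν hν => ?_
    rw [ih (by omega), Finset.mul_sum, Finset.mul_sum]
    refine Finset.sum_congr rfl fun y _ => ?_
    rw [Finset.prod_pow_eq_pow_sum, ← pow_add, ← pow_add, Fin.sum_univ_succ,
      ← Finset.sum_add_distrib]
    congr 2
    refine Finset.sum_congr rfl fun j _ => ?_
    exact Nat.sub_add_cancel (Finset.mem_Icc.1 (Fintype.mem_piFinset.1 hν j)).2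

theorem branch_specPoint_add (k d : ℕ) (T : R) (lam : Fin (k + d) → ℕ) :
    branch (k + d) lam (specPoint k T (k + d)) =
      ∑ y ∈ patterns (k + d) lam, T ^ ∑ j : Fin k, y (k - 1 - j) j := by
  induction d with
  | zero =>
    refine (branch_specPoint_of_le k T k le_rfl lam).trans (Finset.sum_congr rfl fun y hy => ?_)
    congr 1
    exact Finset.sum_congr rfl fun j _ => ((mem_patterns.1 hy).top j).symm
  | succ d ih =>
    have h0 : specPoint k T (k + d + 1) 0 = 1 := if_pos (by simp)
    change branch (k + d + 1) lam (specPoint k T (k + d + 1)) =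
      ∑ y ∈ patterns (k + d + 1) lam, _
    rw [branch, tail_specPoint, h0, sum_patterns_succ, one_pow, one_mul]
    refine Finset.sum_congr rfl fun ν hν => ?_
    simp only [one_pow, Finset.prod_const_one, one_mul]
    rw [ih]
    refine Finset.sum_congr rfl fun y _ => ?_
    congr 1
    exact Finset.sum_congr rfl fun j _ => (addTop_of_lt _ _ (by omega)).symm

end Patterns

section Arrays

variable {k N : ℕ} {y : ℕ → ℕ → ℕ}

theorem IsPattern.le_rect (h : IsPattern (k + k) (rect k N) y) {i j : ℕ} (hij : i + j < k + k) :
    y i j ≤ rect k N ⟨k + k - 1 - i, by omega⟩ := by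
  have h1 := h.row_le i j (k + k - 1 - i - j) (by omega)
  have h2 := h.top ⟨k + k - 1 - i, by omega⟩
  rw [← h2]
  refine h1.trans (le_of_eq ?_)
  simp only
  congr 1 <;> omega

theorem IsPattern.rect_le (h : IsPattern (k + k) (rect k N) y) {i j : ℕ} (hij : i + j < k + k) :
    rect k N ⟨j, by omega⟩ ≤ y i j := by
  have h1 := h.col_le i j (k + k - 1 - i - j) (by omega)
  have h2 := h.top ⟨j, by omega⟩
  rw [← h2]
  refine le_trans (le_of_eq ?_) h1
  simp only
  congr 1
  omega

theorem IsPattern.eq_zero_of_le (h : IsPattern (k + k) (rect k N) y) {i j : ℕ} (hi : k ≤ i) :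
    y i j = 0 := by
  rcases Nat.lt_or_ge (i + j) (k + k) with hij | hij
  · have := h.le_rect hij
    rw [rect, if_pos (by simp only; omega)] at this
    omega
  · exact h.zero i j hij

theorem IsPattern.le (h : IsPattern (k + k) (rect k N) y) {i j : ℕ} : y i j ≤ N := by
  rcases Nat.lt_or_ge (i + j) (k + k) with hij | hij
  · refine (h.le_rect hij).trans ?_
    rw [rect]
    split_ifs <;> omega
  · rw [h.zero i j hij]
    exact Nat.zero_le _

theorem IsPattern.eq_of_le (h : IsPattern (k + k) (rect k N) y) {i j : ℕ} (hj : k ≤ j)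
    (hij : i + j < k + k) : y i j = N := by
  refine le_antisymm h.le ?_
  have := h.rect_le hij
  rwa [rect, if_neg (by simp only; omega)] at this

/-- The pattern of a `k × k` array. -/
def toPattern (N : ℕ) (x : Fin k → Fin k → ℤ) (i j : ℕ) : ℕ :=
  if h : i < k ∧ j < k then (x ⟨i, h.1⟩ ⟨j, h.2⟩).toNat
  else if i < k ∧ i + j < k + k then N else 0

/-- Arrays with entries between `0` and `N`, weakly increasing rows and weakly decreasing columns. -/
def IsArray (k N : ℕ) (x : Fin k → Fin k → ℤ) : Prop :=
  (∀ i j, 0 ≤ x i j ∧ x i j ≤ (N : ℤ)) ∧ (∀ i : Fin k, Monotone (x i)) ∧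
    ∀ j : Fin k, Antitone fun i => x i j

theorem isPattern_toPattern {x : Fin k → Fin k → ℤ} (hx : IsArray k N x) :
    IsPattern (k + k) (rect k N) (toPattern N x) where
  zero i j h := by
    rw [toPattern, dif_neg (by omega), if_neg (by omega)]
  top j := by
    rw [toPattern, dif_neg (by omega), rect]
    split_ifs <;> omega
  col i j h := by
    by_cases hj : j < k
    · by_cases hi : i + 1 < k
      · rw [toPattern, toPattern, dif_pos ⟨hi, hj⟩, dif_pos ⟨by omega, hj⟩]
        exact Int.toNat_le_toNat (hx.2.2 ⟨j, hj⟩ (Fin.mk_le_mk.2 (Nat.le_succ i)))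
      · rw [toPattern, dif_neg (by omega), if_neg (by omega)]
        exact Nat.zero_le _
    · rw [toPattern, toPattern, dif_neg (by omega), dif_neg (by omega)]
      split_ifs <;> omega
  row i j h := by
    by_cases hi : i < k
    · by_cases hj : j + 1 < k
      · rw [toPattern, toPattern, dif_pos ⟨hi, by omega⟩, dif_pos ⟨hi, hj⟩]
        exact Int.toNat_le_toNat (hx.2.1 ⟨i, hi⟩ (Fin.mk_le_mk.2 (Nat.le_succ j)))
      · have h1 : toPattern N x i (j + 1) = N := by
          rw [toPattern, dif_neg (by omega), if_pos (by omega)]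
        rw [h1, toPattern]
        split_ifs with h2 h3
        · exact Int.toNat_le.2 (hx.1 _ _).2
        · exact le_rfl
        · exact Nat.zero_le _
    · rw [toPattern, dif_neg (by omega), if_neg (by omega)]
      exact Nat.zero_le _

theorem toPattern_coe (h : IsPattern (k + k) (rect k N) y) :
    toPattern N (fun i j : Fin k => (y i j : ℤ)) = y := by
  funext i j
  rw [toPattern]
  split_ifs with h1 h2
  · simp
  · exact (h.eq_of_le (by omega) h2.2).symm
  · rcases Nat.lt_or_ge (i + j) (k + k) with hij | hij
    · exact (h.eq_zero_of_le (by omega)).symm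
    · exact (h.zero i j hij).symm

theorem coe_toPattern {x : Fin k → Fin k → ℤ} (hx : IsArray k N x) :
    (fun i j : Fin k => (toPattern N x i j : ℤ)) = x := by
  funext i j
  rw [toPattern, dif_pos ⟨i.2, j.2⟩]
  exact Int.toNat_of_nonneg (hx.1 i j).1

theorem isArray_coe (h : IsPattern (k + k) (rect k N) y) :
    IsArray k N fun i j : Fin k => (y i j : ℤ) := by
  refine ⟨fun i j => ⟨Int.natCast_nonneg _, Int.ofNat_le.2 h.le⟩, fun i j j' hj => ?_,
    fun j i i' hi => ?_⟩
  · have hj' : (j : ℕ) ≤ j' := hj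
    have := h.row_le i j (j' - j) (by omega)
    rw [Nat.add_sub_cancel' hj'] at this
    exact Int.ofNat_le.2 this
  · have hi' : (i : ℕ) ≤ i' := hi
    have := h.col_le i j (i' - i) (by omega)
    rw [Nat.add_sub_cancel' hi'] at this
    exact Int.ofNat_le.2 this

theorem sum_antidiagonal (y : ℕ → ℕ → ℕ) :
    ∑ i : Fin k, (y i (i.rev : Fin k) : ℤ) = ((∑ j : Fin k, y (k - 1 - j) j : ℕ) : ℤ) := by
  rw [← Equiv.sum_comp Fin.revPerm]
  push_cast
  refine Finset.sum_congr rfl fun j _ => ?_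
  rw [Fin.revPerm_apply, Fin.rev_rev, Fin.val_rev, Nat.sub_sub, add_comm 1]

/-- Patterns over the rectangle correspond to arrays. -/
theorem card_arrays_eq {n : ℕ} {c : ℤ} (hc : c = n) :
    Nat.card {x : Fin k → Fin k → ℤ //
        (∀ i j, 0 ≤ x i j ∧ x i j ≤ (N : ℤ)) ∧ (∑ i : Fin k, x i i.rev) = c ∧
        (∀ i : Fin k, Monotone (x i)) ∧ (∀ j : Fin k, Antitone (fun i => x i j))} =
      ((patterns (k + k) (rect k N)).filter fun y => ∑ j : Fin k, y (k - 1 - j) j = n).card := by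
  refine (Nat.card_congr (β := {y // y ∈ (patterns (k + k) (rect k N)).filter
    fun y => ∑ j : Fin k, y (k - 1 - j) j = n}) ?_).trans ?_
  · refine ⟨fun x => ⟨toPattern N x.1, ?_⟩, fun y => ⟨fun i j => (y.1 i j : ℤ), ?_⟩, ?_, ?_⟩
    · obtain ⟨x, h1, h2, h3, h4⟩ := x
      have hx : IsArray k N x := ⟨h1, h3, h4⟩
      refine Finset.mem_filter.2 ⟨mem_patterns.2 (isPattern_toPattern hx), ?_⟩
      rw [← coe_toPattern hx, hc] at h2
      exact_mod_cast (sum_antidiagonal _).symm.trans h2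
    · obtain ⟨h1, h2⟩ := Finset.mem_filter.1 y.2
      obtain ⟨h3, h4, h5⟩ := isArray_coe (mem_patterns.1 h1)
      exact ⟨h3, (sum_antidiagonal _).trans ((congrArg Nat.cast h2).trans hc.symm), h4, h5⟩
    · rintro ⟨x, h1, h2, h3, h4⟩
      exact Subtype.ext (coe_toPattern ⟨h1, h3, h4⟩)
    · rintro ⟨y, hy⟩
      exact Subtype.ext (toPattern_coe (mem_patterns.1 (Finset.mem_filter.1 hy).1))
  · rw [Nat.card_eq_fintype_card, Fintype.card_coe]

end Arrays

theorem coeff_pow_eq_sum_antidiagonalTuple {R : Type*} [CommSemiring R] (p : R[X]) (k n : ℕ) :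
    (p ^ k).coeff n = ∑ x ∈ Finset.Nat.antidiagonalTuple k n, ∏ i, p.coeff (x i) := by
  induction k generalizing n with
  | zero => rcases n with _ | n <;> simp [Polynomial.coeff_one]
  | succ k ih =>
    rw [pow_succ', Polynomial.coeff_mul]
    simp only [ih, Finset.mul_sum]
    rw [Finset.sum_sigma']
    refine Finset.sum_nbij' (fun p => Fin.cons p.1.1 p.2)
      (fun x => ⟨(x 0, ∑ i, Fin.tail x i), Fin.tail x⟩) ?_ ?_ ?_ ?_ ?_
    · rintro ⟨⟨a, b⟩, x⟩ h
      obtain ⟨h1, h2⟩ := Finset.mem_sigma.1 h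
      rw [Finset.Nat.mem_antidiagonalTuple, Fin.sum_cons, Finset.Nat.mem_antidiagonalTuple.1 h2]
      exact Finset.HasAntidiagonal.mem_antidiagonal.1 h1
    · intro x hx
      rw [Finset.Nat.mem_antidiagonalTuple, Fin.sum_univ_succ] at hx
      exact Finset.mem_sigma.2
        ⟨Finset.HasAntidiagonal.mem_antidiagonal.2 hx, Finset.Nat.mem_antidiagonalTuple.2 rfl⟩
    · rintro ⟨⟨a, b⟩, x⟩ h
      have h2 : ∑ i, x i = b := Finset.Nat.mem_antidiagonalTuple.1 (Finset.mem_sigma.1 h).2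
      simp [h2]
    · intro x _
      exact Fin.cons_self_tail x
    · rintro ⟨⟨a, b⟩, x⟩ h
      simp [Fin.prod_univ_succ]

section Conjugation

variable {N : ℕ}

/-- The polynomial `det (1 + T θ)`. -/
noncomputable def charDet (θ : Matrix (Fin N) (Fin N) ℂ) : ℂ[X] :=
  (1 + (X : ℂ[X]) • θ.map C).det

theorem charDet_eq_reverse (θ : Matrix (Fin N) (Fin N) ℂ) :
    charDet θ = (-θ).charpoly.reverse := by
  rw [Matrix.reverse_charpoly, Matrix.charpolyRev, charDet]
  congr 1
  rw [Matrix.map_neg _ (fun a => C_neg), smul_neg, sub_neg_eq_add]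

theorem map_conj_charDet {θ : Matrix (Fin N) (Fin N) ℂ} (hθ : θ ∈ Matrix.unitaryGroup (Fin N) ℂ) :
    (charDet θ).map (starRingEnd ℂ) = C (star θ.det) * (-θ).charpoly := by
  have h1 : (charDet θ).map (starRingEnd ℂ) = charDet (star θ) := by
    rw [charDet, charDet, ← Polynomial.coe_mapRingHom, RingHom.map_det, ← Matrix.det_transpose]
    congr 1
    refine Matrix.ext fun i j => ?_
    by_cases hij : i = j
    · subst hij; simp
    · simp [Matrix.one_apply_ne hij, Matrix.one_apply_ne (Ne.symm hij)]
  have h2 : (1 + (X : ℂ[X]) • (star θ).map C) =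
      (star θ).map C * (-θ).charmatrix := by
    have h3 : (star θ).map (C : ℂ →+* ℂ[X]) * θ.map C = 1 := by
      rw [← Matrix.map_mul, (Matrix.mem_unitaryGroup_iff'.1 hθ)]
      simp
    rw [Matrix.charmatrix, mul_sub, RingHom.mapMatrix_apply, Matrix.map_neg _ (fun a => C_neg),
      mul_neg, h3, sub_neg_eq_add, add_comm, Matrix.scalar_apply, ← Matrix.smul_one_eq_diagonal,
      Matrix.mul_smul, mul_one]
  rw [h1, charDet, h2, Matrix.det_mul, Matrix.charpoly]
  congr 1
  rw [← RingHom.mapMatrix_apply, ← RingHom.map_det, Matrix.star_eq_conjTranspose,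
    Matrix.det_conjTranspose]

theorem reverse_pow_of_domain {R : Type*} [CommRing R] [IsDomain R] (p : R[X]) (k : ℕ) :
    (p ^ k).reverse = p.reverse ^ k := by
  induction k with
  | zero => rw [pow_zero, pow_zero, ← C_1, reverse_C]
  | succ k ih => rw [pow_succ, pow_succ, reverse_mul_of_domain, ih]

theorem star_coeff_charDet_pow {θ : Matrix (Fin N) (Fin N) ℂ}
    (hθ : θ ∈ Matrix.unitaryGroup (Fin N) ℂ) {k m : ℕ} (hm : m ≤ k * N) :
    star ((charDet θ ^ k).coeff m) = star (θ.det ^ k) * (charDet θ ^ k).coeff (k * N - m) := by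
  have h1 : star ((charDet θ ^ k).coeff m) =
      (((charDet θ).map (starRingEnd ℂ)) ^ k).coeff m := by
    rw [← Polynomial.map_pow, Polynomial.coeff_map]
    rfl
  have hdeg : ((-θ).charpoly ^ k).natDegree = k * N := by
    rw [Polynomial.natDegree_pow, Matrix.charpoly_natDegree_eq_dim, Fintype.card_fin]
  rw [h1, map_conj_charDet hθ, mul_pow, ← C_pow, coeff_C_mul, star_pow, charDet_eq_reverse,
    ← reverse_pow_of_domain, coeff_reverse, hdeg, revAt_le (Nat.sub_le _ _), Nat.sub_sub_self hm]

theorem map_evalMat_detPoly (θ : Matrix (Fin N) (Fin N) ℂ) :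
    (detPoly N).map (evalMat θ) = charDet θ := by
  rw [detPoly, charDet, ← Polynomial.coe_mapRingHom, RingHom.map_det]
  congr 1
  refine Matrix.ext fun i j => ?_
  by_cases hij : i = j
  · subst hij; simp [evalMat]
  · simp [Matrix.one_apply_ne hij, evalMat]

theorem evalMat_coeff_detPoly_pow (θ : Matrix (Fin N) (Fin N) ℂ) (k n : ℕ) :
    evalMat θ ((detPoly N ^ k).coeff n) = (charDet θ ^ k).coeff n := by
  rw [← map_evalMat_detPoly, ← Polynomial.map_pow, Polynomial.coeff_map]

end Conjugation

section Final

variable {N : ℕ} (μ : Measure (Matrix.unitaryGroup (Fin N) ℂ))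

theorem matrixIntegral_eq_detFunctional [IsFiniteMeasure μ] {k m : ℕ} (hm : m ≤ k * N) :
    (matrixIntegral k m N μ : ℂ) = detFunctional μ k
      ((detPoly N ^ k).coeff (k * N - m) * (detPoly N ^ k).coeff m) := by
  rw [matrixIntegral, ← integral_complex_ofReal]
  refine integral_congr_ae (Filter.Eventually.of_forall fun θ => ?_)
  have h1 : ∑ x ∈ Finset.Nat.antidiagonalTuple k m, ∏ i, extPowTrace N θ (x i) =
      (charDet (θ : Matrix (Fin N) (Fin N) ℂ) ^ k).coeff m :=
    (coeff_pow_eq_sum_antidiagonalTuple _ k m).symm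
  have h2 := star_coeff_charDet_pow θ.2 hm
  simp only [h1]
  rw [Complex.ofReal_pow, ← Complex.conj_mul', starRingEnd_apply, h2, map_mul,
    evalMat_coeff_detPoly_pow, evalMat_coeff_detPoly_pow, map_pow, evalMat_det, mul_assoc]

theorem euler_coeff_detPoly_pow (k n : ℕ) :
    euler N ((detPoly N ^ k).coeff n) = (n : ℂ) • (detPoly N ^ k).coeff n := by
  rw [coeff_pow_eq_sum_antidiagonalTuple, map_sum, Finset.smul_sum]
  refine Finset.sum_congr rfl fun x hx => ?_
  rw [← Finset.Nat.mem_antidiagonalTuple.1 hx, derivation_prod, Nat.cast_sum, Finset.sum_smul]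
  refine Finset.sum_congr rfl fun i _ => ?_
  change _ * euler N (elemSym N (x i)) = _
  rw [euler_elemSym, mul_smul_comm]
  congr 1
  exact Finset.prod_erase_mul _ _ (Finset.mem_univ i)

variable [IsProbabilityMeasure μ] [μ.IsMulLeftInvariant] (k : ℕ)

theorem detFunctional_coeff_mul_coeff_eq_zero {a b : ℕ} (h : a + b ≠ k * N) :
    detFunctional μ k ((detPoly N ^ k).coeff a * (detPoly N ^ k).coeff b) = 0 := by
  have h1 := detFunctional_euler μ k ((detPoly N ^ k).coeff a * (detPoly N ^ k).coeff b)
  rw [Derivation.leibniz, euler_coeff_detPoly_pow, euler_coeff_detPoly_pow, smul_eq_mul,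
    smul_eq_mul, mul_smul_comm, mul_smul_comm, mul_comm ((detPoly N ^ k).coeff b), ← add_smul,
    map_smul, smul_eq_mul] at h1
  have h2 : ((a + b : ℕ) : ℂ) - ((k * N : ℕ) : ℂ) ≠ 0 := sub_ne_zero.2 (Nat.cast_injective.ne h)
  refine (mul_eq_zero.1 ?_).resolve_left h2
  push_cast
  linear_combination h1

theorem detE_pow_eq_sum (t : ℂ) :
    detE N t ^ k = ∑ n ∈ Finset.range (k * N + 1), t ^ n • (detPoly N ^ k).coeff n := by
  have hdeg : (detPoly N ^ k).natDegree < k * N + 1 := by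
    refine Nat.lt_succ_of_le (natDegree_pow_le.trans ?_)
    exact Nat.mul_le_mul_left k (natDegree_detPoly_le N)
  rw [← eval_detPoly, ← eval_pow, eval_eq_sum_range' hdeg]
  refine Finset.sum_congr rfl fun n _ => ?_
  rw [MvPolynomial.smul_eq_C_mul, map_pow, mul_comm]

theorem eval_specPoint_genPoly (t : ℂ) :
    MvPolynomial.eval (specPoint k t (k + k)) (genPoly (detFunctional μ k) (k + k)) =
      ∑ n ∈ Finset.range (k * N + 1), t ^ n * detFunctional μ k
        ((detPoly N ^ k).coeff (k * N - n) * (detPoly N ^ k).coeff n) := by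
  have h1 : ∏ j : Fin (k + k), detE N (specPoint k t (k + k) j) = detE N 1 ^ k * detE N t ^ k := by
    rw [Fin.prod_univ_add]
    simp [specPoint]
  rw [eval_genPoly, h1, detE_pow_eq_sum, detE_pow_eq_sum, Finset.mul_sum, map_sum]
  refine Finset.sum_congr rfl fun n hn => ?_
  have hn' : n ≤ k * N := Nat.lt_succ_iff.1 (Finset.mem_range.1 hn)
  rw [mul_smul_comm, map_smul, smul_eq_mul, Finset.sum_mul, map_sum,
    Finset.sum_eq_single (k * N - n)]
  · simp
  · intro a _ ha
    rw [one_pow, one_smul]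
    exact detFunctional_coeff_mul_coeff_eq_zero μ k (by omega)
  · intro h
    exact absurd (Finset.mem_range.2 (by omega)) h

theorem detFunctional_eq_card {n : ℕ} (hn : n ≤ k * N) :
    detFunctional μ k ((detPoly N ^ k).coeff (k * N - n) * (detPoly N ^ k).coeff n) =
      ((patterns (k + k) (rect k N)).filter fun y => ∑ j : Fin k, y (k - 1 - j) j = n).card := by
  let F : ℂ[X] := ∑ n ∈ Finset.range (k * N + 1), C (detFunctional μ k
    ((detPoly N ^ k).coeff (k * N - n) * (detPoly N ^ k).coeff n)) * X ^ n
  let G : ℂ[X] := ∑ y ∈ patterns (k + k) (rect k N), X ^ ∑ j : Fin k, y (k - 1 - j) j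
  have hFG : F = G := by
    refine Polynomial.funext fun t => ?_
    have h1 := eval_specPoint_genPoly μ k t
    rw [genPoly_eq_branch, map_branch] at h1
    simp only [MvPolynomial.eval_X] at h1
    have h2 := branch_specPoint_add k k t (rect k N)
    simp only [F, G, eval_finsetSum, eval_mul, eval_C, eval_pow, eval_X]
    rw [← h2]
    refine Eq.trans (Finset.sum_congr rfl fun n _ => mul_comm _ _) h1.symm
  have h3 := congrArg (fun p : ℂ[X] => p.coeff n) hFG
  simp only [F, G, finsetSum_coeff, coeff_C_mul_X_pow, coeff_X_pow] at h3
  rw [Finset.sum_ite_eq, if_pos (Finset.mem_range.2 (by omega))] at h3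
  rw [h3, Finset.sum_boole]
  simp only [eq_comm]

end Final

end UnitaryMoments

/-- `x i j` is the entry `x_i^{(j)}` (row `i`, superscript `j`).  The conditions are:
entries in `[0,N]`; anti-diagonal sum `x_1^{(k)} + x_2^{(k-1)} + ⋯ + x_k^{(1)} = kN − m`;
rows weakly increasing in the superscript and columns weakly decreasing down rows. -/
theorem I_k_eq_lattice_point_count (k N m : ℕ) (hk : 1 ≤ k) (hN : 1 ≤ N) (hm : m ≤ k * N)
    (μ : Measure (Matrix.unitaryGroup (Fin N) ℂ))
    (hμ : μ.IsHaarMeasure) (hprob : IsProbabilityMeasure μ) :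
    matrixIntegral k m N μ =
      Nat.card {x : Fin k → Fin k → ℤ //
        (∀ i j, 0 ≤ x i j ∧ x i j ≤ (N : ℤ)) ∧
        (∑ i : Fin k, x i i.rev) = (k : ℤ) * N - m ∧
        (∀ i : Fin k, Monotone (x i)) ∧
        (∀ j : Fin k, Antitone (fun i => x i j))} := by
  have hc : (k : ℤ) * N - m = ((k * N - m : ℕ) : ℤ) := by
    rw [Nat.cast_sub hm, Nat.cast_mul]
  rw [UnitaryMoments.card_arrays_eq hc]
  have h1 := UnitaryMoments.matrixIntegral_eq_detFunctional μ hm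
  have h2 := UnitaryMoments.detFunctional_eq_card μ k (Nat.sub_le (k * N) m)
  rw [Nat.sub_sub_self hm, mul_comm] at h2
  exact_mod_cast h1.trans h2
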